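/- arXiv:2412.06659 — 5 statements merged into one kernel-verified Lean document; each statement's English description precedes it below -/
import Mathlib

section
/- Let R be a commutative Noetherian local ring and M, N nonzero finitely generated R-modules. Then depth N − dim M ≤ grade(M,N), where grade(M,N) = inf{i : Ext^i_R(M,N) ≠ 0}. -/
/-!
The inequality is Ischebeck's theorem: if `𝔪` contains an `N`-regular sequence of length `n`, then
`Ext^i(M, N) = 0` whenever `i + dim M < n`. The proof is by induction on `dim M`. A finite module
over a Noetherian ring has a filtration with quotients `R ⧸ p`, `p` prime, each a subquotient of
`M` and so of dimension at most `dim M`; the long exact sequence reduces the claim to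
`M = R ⧸ p`. If `p = 𝔪`, the claim is the vanishing part of Rees's theorem. Otherwise choose
`x ∈ 𝔪` outside `p`; it is regular on `R ⧸ p`, and `R ⧸ (p, x)` has smaller dimension, so
`Ext^{i+1}(R ⧸ (p, x), N) = 0` by induction. Hence `x` acts surjectively on the finitely generated
module `Ext^i(R ⧸ p, N)`, which vanishes by Nakayama's lemma.

This is carried out for `CategoryTheory.Abelian.Ext`, defined through the derived category;
`subsingleton_extMod` transfers vanishing to `extMod`, defined through left derived functors.
-/

open CategoryTheory CategoryTheory.Limits Opposite

noncomputable section

variable (R : Type) [CommRing R]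

/-- The `i`-th Ext module of two `R`-modules. -/
def extMod (M N : Type) [AddCommGroup M] [Module R M] [AddCommGroup N] [Module R N]
    (i : ℕ) : ModuleCat R :=
  ((Ext R (ModuleCat.{0} R) i).obj (op (ModuleCat.of R M))).obj (ModuleCat.of R N)

/-- The `i`-th Tor module of two `R`-modules. -/
def torMod (M N : Type) [AddCommGroup M] [Module R M] [AddCommGroup N] [Module R N]
    (i : ℕ) : ModuleCat R :=
  ((Tor (ModuleCat.{0} R) i).obj (ModuleCat.of R M)).obj (ModuleCat.of R N)

/-- `grade(M,N) = inf { i | Ext^i(M,N) ≠ 0 }`, as an extended natural number. -/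
def extGrade (M N : Type) [AddCommGroup M] [Module R M] [AddCommGroup N] [Module R N] : ℕ∞ :=
  sInf {c : ℕ∞ | ∃ i : ℕ, c = i ∧ Nontrivial (extMod R M N i)}

/-- `P_R(M,N) = sup { i | Ext^i(M,N) ≠ 0 }`, as an extended natural number. -/
def extSup (M N : Type) [AddCommGroup M] [Module R M] [AddCommGroup N] [Module R N] : ℕ∞ :=
  sSup {c : ℕ∞ | ∃ i : ℕ, c = i ∧ Nontrivial (extMod R M N i)}

/-- `depth(I, N)`: the supremum of lengths of `N`-regular sequences contained in `I`. -/
def idealDepth (I : Ideal R) (N : Type) [AddCommGroup N] [Module R N] : ℕ∞ :=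
  ⨆ rs : {l : List R // (∀ r ∈ l, r ∈ I) ∧ RingTheory.Sequence.IsRegular N l},
    (rs.1.length : ℕ∞)

/-- The depth of a module over a local ring. -/
def moduleDepth [IsLocalRing R] (N : Type) [AddCommGroup N] [Module R N] : ℕ∞ :=
  idealDepth R (IsLocalRing.maximalIdeal R) N

/-- The Krull dimension of a module: the sup of lengths of chains of primes in its support. -/
def moduleDim (M : Type) [AddCommGroup M] [Module R M] : ℕ∞ :=
  ⨆ c : LTSeries (Module.support R M), (c.length : ℕ∞)

/-- A quasi-projective resolution: a bounded-below complex of projectives whose homologies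
are finite direct sums of copies of `M`, not all zero. -/
def IsQuasiProjRes (P : ChainComplex (ModuleCat.{0} R) ℤ)
    (M : Type) [AddCommGroup M] [Module R M] : Prop :=
  (∀ i, Projective (P.X i)) ∧
  (∃ n : ℤ, ∀ i < n, IsZero (P.X i)) ∧
  (∃ a : ℤ → ℕ, (∃ i, 0 < a i) ∧
    ∀ i, Nonempty ((P.homology i) ≅ ModuleCat.of R (Fin (a i) → M)))

/-- Quasi-projective dimension: `inf { sup P - hsup P }` over bounded quasi-projective
resolutions `P` of `M`.  The condition `sup P - hsup P ≤ n` is encoded as the existence of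
a degree `h` with nonzero homology such that `P` vanishes in degrees `> h + n`. -/
def qpd (M : Type) [AddCommGroup M] [Module R M] : ℕ∞ :=
  sInf {c : ℕ∞ | ∃ n : ℕ, c = n ∧ ∃ P : ChainComplex (ModuleCat.{0} R) ℤ,
    IsQuasiProjRes R P M ∧
    ∃ h : ℤ, ¬ IsZero (P.homology h) ∧ ∀ i, h + n < i → IsZero (P.X i)}

/-- A quasi-injective resolution: a bounded-above complex of injectives whose homologies
are finite direct sums of copies of `M`, not all zero. -/
def IsQuasiInjRes (I : ChainComplex (ModuleCat.{0} R) ℤ)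
    (M : Type) [AddCommGroup M] [Module R M] : Prop :=
  (∀ i, Injective (I.X i)) ∧
  (∃ n : ℤ, ∀ i > n, IsZero (I.X i)) ∧
  (∃ b : ℤ → ℕ, (∃ i, 0 < b i) ∧
    ∀ i, Nonempty ((I.homology i) ≅ ModuleCat.of R (Fin (b i) → M)))

/-- Quasi-injective dimension: `inf { hinf I - inf I }` over bounded quasi-injective
resolutions `I` of `M`. -/
def qid (M : Type) [AddCommGroup M] [Module R M] : ℕ∞ :=
  sInf {c : ℕ∞ | ∃ n : ℕ, c = n ∧ ∃ I : ChainComplex (ModuleCat.{0} R) ℤ,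
    IsQuasiInjRes R I M ∧
    ∃ h : ℤ, ¬ IsZero (I.homology h) ∧ ∀ i, i < h - n → IsZero (I.X i)}

/-- Projective dimension, via finite projective resolutions. -/
def projDim (M : Type) [AddCommGroup M] [Module R M] : ℕ∞ :=
  sInf {c : ℕ∞ | ∃ n : ℕ, c = n ∧ ∃ P : ChainComplex (ModuleCat.{0} R) ℤ,
    (∀ i, Projective (P.X i)) ∧ (∀ i : ℤ, (i < 0 ∨ (n : ℤ) < i) → IsZero (P.X i)) ∧
    Nonempty ((P.homology 0) ≅ ModuleCat.of R M) ∧ ∀ i ≠ 0, IsZero (P.homology i)}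

/-- Injective dimension, via finite injective resolutions (in degrees `-n, …, 0`). -/
def injDim (M : Type) [AddCommGroup M] [Module R M] : ℕ∞ :=
  sInf {c : ℕ∞ | ∃ n : ℕ, c = n ∧ ∃ I : ChainComplex (ModuleCat.{0} R) ℤ,
    (∀ i, Injective (I.X i)) ∧ (∀ i : ℤ, (0 < i ∨ i < -(n : ℤ)) → IsZero (I.X i)) ∧
    Nonempty ((I.homology 0) ≅ ModuleCat.of R M) ∧ ∀ i ≠ 0, IsZero (I.homology i)}

/-- The depth of the localization `N_p` over the local ring `R_p`. -/
def localDepth (p : PrimeSpectrum R) (N : Type) [AddCommGroup N] [Module R N] : ℕ∞ :=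
  idealDepth (Localization.AtPrime p.asIdeal)
    (IsLocalRing.maximalIdeal (Localization.AtPrime p.asIdeal))
    (LocalizedModule p.asIdeal.primeCompl N)

end

lemma subsingleton_ext_of_subsingleton {R : Type} [CommRing R] (M : Type) [AddCommGroup M]
    [Module R M] [Subsingleton M] (N : ModuleCat.{0} R) (i : ℕ) :
    Subsingleton (Abelian.Ext (ModuleCat.of R M) N i) := by
  refine subsingleton_of_forall_eq 0 fun a => ?_
  rw [← Abelian.Ext.mk₀_id_comp a,
    (ModuleCat.isZero_of_subsingleton (ModuleCat.of R M)).eq_of_src (𝟙 _) 0]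
  simp

/-- When `Ext^{i+1}(L/xL, N) = 0` for an `L`-regular `x ∈ 𝔪`, multiplication by `x` is
onto on the finite module `Ext^i(L, N)`, which therefore vanishes by Nakayama's lemma. -/
lemma subsingleton_ext_of_quotSMulTop {R : Type} [CommRing R] [IsNoetherianRing R] [IsLocalRing R]
    (L N : ModuleCat.{0} R) [Module.Finite R L] [Module.Finite R N] {x : R}
    (hx : x ∈ IsLocalRing.maximalIdeal R) (reg : IsSMulRegular L x) (i : ℕ)
    (h : Subsingleton (Abelian.Ext (ModuleCat.of R (QuotSMulTop x L)) N (i + 1))) :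
    Subsingleton (Abelian.Ext L N i) := by
  have surj : ∀ a : Abelian.Ext L N i, ∃ b : Abelian.Ext L N i, x • b = a := by
    intro a
    obtain ⟨b, hb⟩ := Abelian.Ext.contravariant_sequence_exact₁ reg.smulShortComplex_shortExact N
      (x₁ := a) (add_comm 1 i) (h.elim _ _)
    refine ⟨b, ?_⟩
    rw [← hb]
    change Abelian.Ext L N i at b
    change x • b = (Abelian.Ext.mk₀ (x • 𝟙 L)).comp b (zero_add i)
    rw [Abelian.Ext.mk₀_smul, Abelian.Ext.smul_comp, Abelian.Ext.mk₀_id_comp]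
  have top_le : (⊤ : Submodule R (Abelian.Ext L N i)) ≤ IsLocalRing.maximalIdeal R • ⊤ := by
    intro a _
    obtain ⟨b, rfl⟩ := surj a
    exact Submodule.smul_mem_smul hx trivial
  have := Submodule.eq_bot_of_le_smul_of_le_jacobson_bot _ _
    (Module.Finite.fg_top) top_le (IsLocalRing.maximalIdeal_le_jacobson _)
  exact (Submodule.subsingleton_iff R).mp (subsingleton_of_bot_eq_top this.symm)

/-- **Ischebeck's theorem**: `Ext^i(M, N) = 0` if `i + dim M` is less than the length of an
`N`-regular sequence in `𝔪`. The bound on `dim M` is strict, so that the induction on `d` starts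
from `M = 0`. -/
lemma subsingleton_ext_of_supportDim_lt {R : Type} [CommRing R] [IsNoetherianRing R]
    [IsLocalRing R] (N : ModuleCat.{0} R) [Module.Finite R N] [Nontrivial N]
    (rs : List R) (mem : ∀ r ∈ rs, r ∈ IsLocalRing.maximalIdeal R)
    (reg : RingTheory.Sequence.IsRegular N rs) (d : ℕ) (M : Type) [AddCommGroup M] [Module R M]
    [Module.Finite R M] (hd : Module.supportDim R M < d) (i : ℕ) (hi : i + d ≤ rs.length) :
    Subsingleton (Abelian.Ext (ModuleCat.of R M) N i) := by
  induction d generalizing M i with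
  | zero =>
    have : Subsingleton M := by
      by_contra hM
      rw [not_subsingleton_iff_nontrivial] at hM
      have := Module.supportDim_ne_bot_of_nontrivial R M
      obtain ⟨a, ha⟩ := WithBot.ne_bot_iff_exists.mp this
      rw [← ha] at hd
      exact absurd (WithBot.coe_lt_coe.mp hd) (by simp)
    exact subsingleton_ext_of_subsingleton M N i
  | succ d ih =>
    revert hd
    -- The bound on `dim M` passes to submodules and quotients, so it is carried through the
    -- induction on a prime filtration.
    induction ‹Module.Finite R M› using
      IsNoetherianRing.induction_on_isQuotientEquivQuotientPrime R with
    | subsingleton L =>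
      intro _
      exact subsingleton_ext_of_subsingleton L N i
    | quotient L p e =>
      intro hd
      by_cases hp : IsLocalRing.maximalIdeal R ≤ p.1
      · refine ModuleCat.subsingleton_ext_of_exists_isRegular (IsLocalRing.maximalIdeal R)
          (ModuleCat.of R L) ?_ N ?_ rs mem reg i (by omega)
        · change Module.support R L ⊆ _
          rw [e.support_eq, Module.support_eq_zeroLocus, Ideal.annihilator_quotient]
          exact PrimeSpectrum.zeroLocus_anti_mono hp
        · refine lt_top_iff_ne_top.mpr (Ne.symm ?_)
          exact Submodule.top_ne_ideal_smul_of_le_jacobson_annihilator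
            (IsLocalRing.maximalIdeal_le_jacobson _)
      · obtain ⟨x, hx, hxp⟩ := Set.not_subset.mp hp
        have hreg : IsSMulRegular L x := by
          -- `R ⧸ p` is a domain in which `x` is nonzero.
          rw [e.isSMulRegular_congr x, isSMulRegular_iff_right_eq_zero_of_smul]
          intro a ha
          obtain ⟨a, rfl⟩ := Ideal.Quotient.mk_surjective a
          have : Ideal.Quotient.mk p.1 (x * a) = 0 := ha
          rw [Ideal.Quotient.eq_zero_iff_mem] at this ⊢
          exact (p.2.mem_or_mem this).resolve_left hxp
        refine subsingleton_ext_of_quotSMulTop (ModuleCat.of R L) N hx hreg i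
          (ih (QuotSMulTop x L) ?_ (i + 1) (by omega))
        rw [← Module.supportDim_quotSMulTop_succ_eq_supportDim hreg hx] at hd
        push_cast at hd
        exact lt_of_add_lt_add_right hd
    | exact N₁ N₂ N₃ f g hf hg hfg h₁ h₃ =>
      intro hd
      have h₁ := h₁ ((Module.supportDim_le_of_injective f hf).trans_lt hd)
      have h₃ := h₃ ((Module.supportDim_le_of_surjective g hg).trans_lt hd)
      have hS : (ModuleCat.shortComplexOfCompEqZero f g hfg.linearMap_comp_eq_zero).ShortExact :=
        { exact := ModuleCat.shortComplex_exact _ hfg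
          mono_f := (ModuleCat.mono_iff_injective _).mpr hf
          epi_g := (ModuleCat.epi_iff_surjective _).mpr hg }
      refine subsingleton_of_forall_eq 0 fun a => ?_
      obtain ⟨b, hb⟩ := Abelian.Ext.contravariant_sequence_exact₂ hS N a (h₁.elim _ _)
      rw [← hb, h₃.elim b 0, Abelian.Ext.comp_zero]

/-- The `Ext` modules defined by left derived functors vanish whenever those defined in the
derived category do: both are computed by `Hom(P, N)` for a projective resolution `P` of `M`. -/
lemma subsingleton_extMod {R : Type} [CommRing R]
    (M N : Type) [AddCommGroup M] [Module R M] [AddCommGroup N] [Module R N] (i : ℕ)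
    (h : Subsingleton (Abelian.Ext (ModuleCat.of R M) (ModuleCat.of R N) i)) :
    Subsingleton (extMod R M N i) := by
  let P := projectiveResolution (ModuleCat.of R M)
  refine ModuleCat.subsingleton_of_isZero (IsZero.of_iso ?_ (P.isoExt (R := R) i _))
  rw [← HomologicalComplex.exactAt_iff_isZero_homology]
  cases i with
  | zero =>
    -- A 0-cocycle factors through `coker (P₁ ⟶ P₀) = M`, hence is zero as `Hom(M, N) = 0`.
    rw [HomologicalComplex.exactAt_iff' _ 0 0 1 (by simp) (by simp),
      ShortComplex.moduleCat_exact_iff]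
    intro f hf
    change P.complex.X 0 ⟶ ModuleCat.of R N at f
    replace hf : P.complex.d 1 0 ≫ f = 0 := hf
    have : Subsingleton (ModuleCat.of R M ⟶ ModuleCat.of R N) :=
      Abelian.Ext.addEquiv₀.symm.subsingleton
    refine ⟨0, ?_⟩
    rw [map_zero]
    have : Epi (ShortComplex.mk _ _ P.complex_d_comp_π_f_zero).g := inferInstanceAs (Epi (P.π.f 0))
    have h0 := P.exact₀.g_desc f hf
    rw [← h0]
    have : P.exact₀.desc f hf = 0 := Subsingleton.elim (α := (ModuleCat.of R M ⟶ _)) _ _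
    rw [this, comp_zero]
    rfl
  | succ n =>
    rw [HomologicalComplex.exactAt_iff' _ n (n + 1) (n + 2) (by simp) (by simp),
      ShortComplex.moduleCat_exact_iff]
    intro f hf
    obtain ⟨g, hg⟩ := (P.extMk_eq_zero_iff f (n + 2) rfl hf n rfl).mp (h.elim _ _)
    exact ⟨g, hg⟩

/-- `depth N - dim M ≤ grade(M,N)` over a Noetherian local ring. -/
theorem stmt1 (R : Type) [CommRing R] [IsNoetherianRing R] [IsLocalRing R]
    (M N : Type) [AddCommGroup M] [Module R M] [AddCommGroup N] [Module R N]
    [Module.Finite R M] [Module.Finite R N] (hM : Nontrivial M) (hN : Nontrivial N) :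
    moduleDepth R N - moduleDim R M ≤ extGrade R M N := by
  have hdim : Module.supportDim R M = (moduleDim R M : ℕ∞) := by
    have : Nonempty (Module.support R M) := Module.nonempty_support_of_nontrivial.to_subtype
    exact Order.krullDim_eq_iSup_length
  refine le_sInf ?_
  rintro c ⟨i, rfl, hi⟩
  rw [tsub_le_iff_right]
  refine iSup_le fun ⟨rs, mem, reg⟩ => ?_
  by_contra! hlt
  have hfin : moduleDim R M ≠ ⊤ := fun h => by simp [h] at hlt
  obtain ⟨d, hd⟩ := ENat.ne_top_iff_exists.mp hfin
  rw [← hd] at hlt hdim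
  have hlt' : i + d < rs.length := by exact_mod_cast hlt
  refine not_subsingleton_iff_nontrivial.mpr hi (subsingleton_extMod M N i ?_)
  refine subsingleton_ext_of_supportDim_lt (ModuleCat.of R N) rs mem reg (d + 1) M ?_ i (by omega)
  rw [hdim]
  exact_mod_cast Nat.lt_succ_self d
end

section
/- Let R be a commutative Noetherian local ring and M, N nonzero finitely generated R-modules with Supp M ⊆ Supp N. Then grade(M,N) ≤ dim N − dim M. -/
/-!
Write `I` for the annihilator of `M`, so that `Supp M = V(I)`. If `Ext^i(M, N)` vanishes for all
`i ≤ k`, where `k = dim N - dim M`, then the Rees theorem gives an `N`-regular sequence `x` of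
length `k + 1` inside `I`. Cutting `N` down by `x` lowers the dimension by exactly `k + 1`, while
`Supp (N / xN) = Supp N ∩ V(x)` still contains `Supp M`. Hence `dim M ≤ dim N - (k + 1)`, which is
absurd.

Mathlib's Rees theorem concerns `CategoryTheory.Abelian.Ext`, defined through the derived category,
whereas `extMod` is a derived functor of `Hom`. The two are compared (as far as vanishing goes) by
computing both from a projective resolution.
-/

open CategoryTheory CategoryTheory.Limits Opposite

/-- Vanishing of the derived-functor `Ext` implies vanishing of the derived-category `Ext`. -/
lemma subsingleton_abelianExt_of_extMod (R : Type) [CommRing R]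
    (M N : Type) [AddCommGroup M] [Module R M] [AddCommGroup N] [Module R N] (i : ℕ)
    (h : Subsingleton (extMod R M N i)) :
    Subsingleton (Abelian.Ext (ModuleCat.of R M) (ModuleCat.of R N) i) := by
  let P := projectiveResolution (ModuleCat.of R M)
  have hz : IsZero ((P.complex.linearYonedaObj R (ModuleCat.of R N)).homology i) :=
    IsZero.of_iso ((ModuleCat.isZero_of_iff_subsingleton (M := extMod R M N i)).mpr h)
      (P.isoExt i (ModuleCat.of R N)).symm
  rw [← HomologicalComplex.exactAt_iff_isZero_homology] at hz
  refine subsingleton_of_forall_eq 0 fun α ↦ ?_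
  obtain ⟨f, hf, rfl⟩ := P.extMk_surjective α (i + 1) rfl
  cases i with
  | zero =>
    -- there is no incoming differential in degree `0`, so a cocycle that is a coboundary is zero
    rw [HomologicalComplex.exactAt_iff' _ 0 0 1 (by simp) (by simp),
      ShortComplex.moduleCat_exact_iff] at hz
    obtain ⟨g, hg⟩ : ∃ g : P.complex.X 0 ⟶ ModuleCat.of R N, P.complex.d 0 0 ≫ g = f := hz f hf
    rw [P.complex.shape 0 0 (by simp), zero_comp] at hg
    subst hg
    exact P.extMk_zero _ _
  | succ p =>
    rw [HomologicalComplex.exactAt_iff' _ p (p + 1) (p + 1 + 1) (by simp) (by simp),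
      ShortComplex.moduleCat_exact_iff] at hz
    obtain ⟨g, hg⟩ := hz f hf
    exact (P.extMk_eq_zero_iff f _ rfl hf p rfl).mpr ⟨g, hg⟩

lemma coe_moduleDim (R : Type) [CommRing R] (M : Type) [AddCommGroup M] [Module R M]
    [Nontrivial M] : (moduleDim R M : WithBot ℕ∞) = Module.supportDim R M := by
  have : Nonempty (Module.support R M) := Module.nonempty_support_of_nontrivial.to_subtype
  rw [Module.supportDim, Order.krullDim_eq_iSup_length, moduleDim]

/-- If `Supp M ⊆ Supp N` then `grade(M,N) ≤ dim N - dim M` over a Noetherian local ring. -/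
theorem stmt2 (R : Type) [CommRing R] [IsNoetherianRing R] [IsLocalRing R]
    (M N : Type) [AddCommGroup M] [Module R M] [AddCommGroup N] [Module R N]
    [Module.Finite R M] [Module.Finite R N] (hM : Nontrivial M) (hN : Nontrivial N)
    (hsupp : Module.support R M ⊆ Module.support R N) :
    extGrade R M N ≤ moduleDim R N - moduleDim R M := by
  have hfin {L : Type} [AddCommGroup L] [Module R L] [Nontrivial L] : moduleDim R L ≠ ⊤ := by
    intro h
    have h1 := (Module.supportDim_le_ringKrullDim R L).trans_lt (ringKrullDim_lt_top (R := R))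
    rw [← coe_moduleDim, h] at h1
    exact lt_irrefl _ h1
  obtain ⟨d, hd⟩ := ENat.ne_top_iff_exists.mp (hfin (L := N))
  obtain ⟨m, hm⟩ := ENat.ne_top_iff_exists.mp (hfin (L := M))
  by_contra! hlt
  have hext : ∀ i < d - m + 1,
      Subsingleton (Abelian.Ext (ModuleCat.of R M) (ModuleCat.of R N) i) := by
    intro i hi
    apply subsingleton_abelianExt_of_extMod
    by_contra hne
    have h1 : extGrade R M N ≤ i := sInf_le ⟨i, rfl, not_subsingleton_iff_nontrivial.mp hne⟩
    have h2 := hlt.trans_le h1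
    rw [← hd, ← hm] at h2
    norm_cast at h2
    omega
  have hI : Module.annihilator R M ≤ IsLocalRing.maximalIdeal R := by
    apply IsLocalRing.le_maximalIdeal
    rw [Ne, Module.annihilator_eq_top_iff]
    exact not_subsingleton M
  -- Nakayama's lemma
  have hlt' : Module.annihilator R M • (⊤ : Submodule R N) < ⊤ := by
    refine lt_top_iff_ne_top.mpr fun h ↦ ?_
    refine top_ne_bot (Submodule.eq_bot_of_le_smul_of_le_jacobson_bot _ (⊤ : Submodule R N)
      Module.Finite.fg_top h.ge ?_)
    rwa [IsLocalRing.jacobson_eq_maximalIdeal _ bot_ne_top]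
  obtain ⟨rs, hlen, hmem, hreg⟩ := ModuleCat.exists_isRegular_of_exists_subsingleton_ext
    (Module.annihilator R M) (d - m + 1) (ModuleCat.of R N) hlt' (ModuleCat.of R M)
    (Module.support_eq_zeroLocus) hext
  have hdim := Module.supportDim_add_length_eq_supportDim_of_isRegular (M := N) rs hreg
  have hle : Ideal.ofList rs ≤ Module.annihilator R M := Ideal.span_le.mpr hmem
  have hsub : Module.support R M ⊆
      Module.support R (N ⧸ Ideal.ofList rs • (⊤ : Submodule R N)) := by
    rw [Module.support_quotient]
    refine Set.subset_inter hsupp ?_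
    rw [Module.support_eq_zeroLocus]
    exact PrimeSpectrum.zeroLocus_anti_mono hle
  have hMle : Module.supportDim R M ≤
      Module.supportDim R (N ⧸ Ideal.ofList rs • (⊤ : Submodule R N)) :=
    Order.krullDim_le_of_strictMono (fun a ↦ ⟨a.1, hsub a.2⟩) fun {_ _} h ↦ h
  have key : Module.supportDim R M + rs.length ≤ Module.supportDim R N :=
    hdim ▸ add_le_add_left hMle _
  rw [← coe_moduleDim, ← coe_moduleDim, ← hd, ← hm, hlen] at key
  have key' : m + (d - m + 1) ≤ d := ENat.natCast_le_natCast.mp (WithBot.coe_le_coe.mp key)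
  omega
end

section
/- Let R be a Noetherian local ring and M, N nonzero finitely generated R-modules with sup{i : Ext^i_R(M,N) ≠ 0} < ∞ and such that the quasi-injective dimension of N is finite. Then depth M ≤ depth R. -/
/-!
Dividing `M` by a regular element raises the largest degree `p` with `Ext^p(M, N) ≠ 0` by exactly one,
by Nakayama's lemma and the long exact sequence (`add_length_le`). Hence it suffices to show `p ≤ d`,
where `d = depth R`, whenever `p` is the largest degree with `Ext^p(A, N) ≠ 0` (`top_ext_le`). Such a
`p` exists for `A = M`: the extension groups of nonzero finitely generated modules are not all zero
(`exists_nontrivial_ext`).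

Suppose `p ≥ 1` is the largest degree with `Ext^p(A, N) ≠ 0`, and let `I` be a bounded quasi-injective
resolution of `N`. Let `Z` be the cycles of `I` in the lowest degree with nonzero homology. Below that
degree `I` is exact, so `Z` has finite injective dimension; and dimension shifting from the top of `I`
shows that `Ext^j(A, Z) = 0` for `j > p` and `Ext^p(A, Z) ≅ Ext^p(A, N^b)` with `b > 0`
(`exists_comparison`). In particular `Ext^p(A, Z)` is finitely generated and nonzero, although `Z`
need not be finitely generated. So it is enough to show `Ext^p(A, Z) = 𝔪 Ext^p(A, Z)` if `p > d`.

Let `k` be the residue field. On every syzygy `Ω` of `k`, with cover `π : F → Ω`, multiplication by an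
element of `𝔪` factors through `F`. Therefore `Hom(F, A) → Hom(ker π, A)` has cokernel a `k`-vector
space, and vanishing of `Ext^j(k, Z)` and `Ext^j(A, Z)` in high degrees gives, by descending induction
on `j` from the injective dimension of `Z`, vanishing of `Ext^j(Hom(Ω, A), Z)`
(`subsingleton_hom_good`).
Applied to the quotient of `R` by a maximal regular sequence, which has projective dimension `d` and
depth zero, this yields `Ext^j(k, Z) = 0` for `j > d` (`subsingleton_residue`). Applied to the given
`A`, it shows that `A → Hom(R^n, A)`, coming from `R^n → 𝔪 ⊆ R`, induces a surjection on
`Ext^p(-, Z)`. The entries of that map lie in `𝔪`, so `Ext^p(A, Z) = 𝔪 Ext^p(A, Z)` (`top_le_smul`).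
-/

open CategoryTheory CategoryTheory.Limits Opposite

namespace QidDepth
open Abelian IsLocalRing RingTheory.Sequence Pointwise

/-! ### Functoriality and long exact sequences of `Ext` -/

section
variable {R : Type} [CommRing R]

/-- `Ext^j_R(A, Z)` for unbundled modules. -/
abbrev EX (R : Type) [CommRing R] (A Z : Type) [AddCommGroup A] [Module R A] [AddCommGroup Z]
    [Module R Z] (j : ℕ) : Type :=
  Abelian.Ext (ModuleCat.of R A) (ModuleCat.of R Z) j

variable {A B C X Z W : Type} [AddCommGroup A] [Module R A] [AddCommGroup B] [Module R B]
  [AddCommGroup C] [Module R C] [AddCommGroup X] [Module R X] [AddCommGroup Z] [Module R Z]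
  [AddCommGroup W] [Module R W]

/-- Contravariant functoriality of `Ext^j(-, Z)`, linear in the map. -/
noncomputable def pre (Z : Type) [AddCommGroup Z] [Module R Z] (j : ℕ) :
    (A →ₗ[R] B) →ₗ[R] EX R B Z j →ₗ[R] EX R A Z j :=
  (Ext.bilinearCompOfLinear R (ModuleCat.of R A) (ModuleCat.of R B) (ModuleCat.of R Z) 0 j j
    (zero_add j)).comp
    ((Ext.linearEquiv₀ (R := R)).trans ModuleCat.homLinearEquiv).symm.toLinearMap

/-- Covariant functoriality of `Ext^j(X, -)`, linear in the map. -/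
noncomputable def post (X : Type) [AddCommGroup X] [Module R X] (j : ℕ) :
    (A →ₗ[R] B) →ₗ[R] EX R X A j →ₗ[R] EX R X B j :=
  (Ext.bilinearCompOfLinear R (ModuleCat.of R X) (ModuleCat.of R A) (ModuleCat.of R B) j 0 j
    (add_zero j)).flip.comp
    ((Ext.linearEquiv₀ (R := R)).trans ModuleCat.homLinearEquiv).symm.toLinearMap

lemma pre_apply (j : ℕ) (f : A →ₗ[R] B) (ξ : EX R B Z j) :
    pre Z j f ξ = (Ext.mk₀ (ModuleCat.ofHom f)).comp ξ (zero_add j) := rfl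

lemma post_apply (j : ℕ) (f : A →ₗ[R] B) (ξ : EX R X A j) :
    post X j f ξ = ξ.comp (Ext.mk₀ (ModuleCat.ofHom f)) (add_zero j) := rfl

lemma pre_comp (j : ℕ) (f : A →ₗ[R] B) (g : B →ₗ[R] C) (ξ : EX R C Z j) :
    pre Z j (g ∘ₗ f) ξ = pre Z j f (pre Z j g ξ) := by
  simp [pre_apply, ModuleCat.ofHom_comp]

lemma pre_id (j : ℕ) (ξ : EX R A Z j) : pre Z j LinearMap.id ξ = ξ := by
  simp [pre_apply]

lemma post_comp (j : ℕ) (f : A →ₗ[R] B) (g : B →ₗ[R] C) (ξ : EX R X A j) :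
    post X j (g ∘ₗ f) ξ = post X j g (post X j f ξ) := by
  simp [post_apply, ModuleCat.ofHom_comp]

lemma post_id (j : ℕ) (ξ : EX R X A j) : post X j LinearMap.id ξ = ξ := by
  simp [post_apply]

lemma subsingleton_pre_retract {j : ℕ} (f : A →ₗ[R] B) (g : B →ₗ[R] A)
    (h : g ∘ₗ f = LinearMap.id) [Subsingleton (EX R B Z j)] : Subsingleton (EX R A Z j) := by
  refine subsingleton_of_forall_eq 0 fun ξ => ?_
  rw [← pre_id j ξ, ← h, pre_comp, Subsingleton.elim (pre Z j g ξ) 0, map_zero]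

lemma subsingleton_post_retract {j : ℕ} (f : A →ₗ[R] B) (g : B →ₗ[R] A)
    (h : g ∘ₗ f = LinearMap.id) [Subsingleton (EX R X B j)] : Subsingleton (EX R X A j) := by
  refine subsingleton_of_forall_eq 0 fun ξ => ?_
  rw [← post_id j ξ, ← h, post_comp, Subsingleton.elim (post X j f ξ) 0, map_zero]

lemma subsingleton_pre_equiv {j : ℕ} (e : A ≃ₗ[R] B) [Subsingleton (EX R B Z j)] :
    Subsingleton (EX R A Z j) :=
  subsingleton_pre_retract e.toLinearMap e.symm.toLinearMap (by simp)

lemma subsingleton_post_equiv {j : ℕ} (e : A ≃ₗ[R] B) [Subsingleton (EX R X B j)] :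
    Subsingleton (EX R X A j) :=
  subsingleton_post_retract e.toLinearMap e.symm.toLinearMap (by simp)

lemma sum_single_proj (n : ℕ) :
    ∑ i : Fin n, LinearMap.single R (fun _ : Fin n => A) i ∘ₗ LinearMap.proj i
      = LinearMap.id := by
  ext i a
  simp

lemma subsingleton_pre_pi {j : ℕ} (n : ℕ) [Subsingleton (EX R A Z j)] :
    Subsingleton (EX R (Fin n → A) Z j) := by
  refine subsingleton_of_forall_eq 0 fun ξ => ?_
  rw [← pre_id j ξ, ← sum_single_proj, map_sum, LinearMap.sum_apply]
  refine Finset.sum_eq_zero fun i _ => ?_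
  rw [pre_comp, Subsingleton.elim (pre Z j _ ξ) 0, map_zero]

lemma subsingleton_post_pi {j : ℕ} (n : ℕ) [Subsingleton (EX R X A j)] :
    Subsingleton (EX R X (Fin n → A) j) := by
  refine subsingleton_of_forall_eq 0 fun ξ => ?_
  rw [← post_id j ξ, ← sum_single_proj, map_sum, LinearMap.sum_apply]
  refine Finset.sum_eq_zero fun i _ => ?_
  rw [post_comp, Subsingleton.elim (post X j _ ξ) 0, map_zero]

lemma shortExact_of {f : A →ₗ[R] B} {g : B →ₗ[R] C} (hf : Function.Injective f)
    (hg : Function.Surjective g) (h : Function.Exact f g) :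
    (ModuleCat.shortComplexOfCompEqZero f g h.linearMap_comp_eq_zero).ShortExact :=
  ModuleCat.shortComplex_shortExact _ h hf hg

section LES
variable {f : A →ₗ[R] B} {g : B →ₗ[R] C} (hf : Function.Injective f)
    (hg : Function.Surjective g) (h : Function.Exact f g)
include hf hg h

lemma post_mid (j : ℕ) [Subsingleton (EX R X A j)] [Subsingleton (EX R X C j)] :
    Subsingleton (EX R X B j) := by
  refine subsingleton_of_forall_eq 0 fun ξ => ?_
  obtain ⟨y, rfl⟩ := Ext.covariant_sequence_exact₂ (ModuleCat.of R X) (shortExact_of hf hg h) ξ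
    (Subsingleton.elim (α := EX R X C j) _ _)
  rw [Subsingleton.elim (α := EX R X A j) y 0, Ext.zero_comp]

lemma post_left (j : ℕ) [Subsingleton (EX R X C j)] [Subsingleton (EX R X B (j + 1))] :
    Subsingleton (EX R X A (j + 1)) := by
  refine subsingleton_of_forall_eq 0 fun ξ => ?_
  obtain ⟨y, rfl⟩ := Ext.covariant_sequence_exact₁ (ModuleCat.of R X) (shortExact_of hf hg h) ξ
    (Subsingleton.elim (α := EX R X B (j + 1)) _ _) rfl
  rw [Subsingleton.elim (α := EX R X C j) y 0, Ext.zero_comp]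

lemma post_surj (j : ℕ) [Subsingleton (EX R X A (j + 1))] :
    Function.Surjective (post X j g) := by
  intro ξ
  exact Ext.covariant_sequence_exact₃ (ModuleCat.of R X) (shortExact_of hf hg h) ξ rfl
    (Subsingleton.elim (α := EX R X A (j + 1)) _ _)

lemma post_right (j : ℕ) [Subsingleton (EX R X B j)] [Subsingleton (EX R X A (j + 1))] :
    Subsingleton (EX R X C j) :=
  (post_surj (X := X) hf hg h j).subsingleton

lemma post_inj (j : ℕ) [Subsingleton (EX R X A j)] :
    Function.Injective (post X j g) := by
  rw [injective_iff_map_eq_zero]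
  intro ξ h0
  obtain ⟨y, rfl⟩ := Ext.covariant_sequence_exact₂ (ModuleCat.of R X) (shortExact_of hf hg h) ξ h0
  rw [Subsingleton.elim (α := EX R X A j) y 0, Ext.zero_comp]

lemma pre_surj_left (j : ℕ) [Subsingleton (EX R C Z (j + 1))] :
    Function.Surjective (pre Z j f) := by
  intro ξ
  exact Ext.contravariant_sequence_exact₁ (shortExact_of hf hg h) (ModuleCat.of R Z) ξ
    (add_comm 1 j) (Subsingleton.elim (α := EX R C Z (j + 1)) _ _)

lemma pre_left (j : ℕ) [Subsingleton (EX R B Z j)] [Subsingleton (EX R C Z (j + 1))] :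
    Subsingleton (EX R A Z j) :=
  (pre_surj_left (Z := Z) hf hg h j).subsingleton

lemma pre_surj_right (j : ℕ) [Subsingleton (EX R A Z j)] :
    Function.Surjective (pre Z j g) := by
  intro ξ
  exact Ext.contravariant_sequence_exact₂ (shortExact_of hf hg h) (ModuleCat.of R Z) ξ
    (Subsingleton.elim (α := EX R A Z j) _ _)

lemma pre_right (j : ℕ) [Subsingleton (EX R A Z j)] [Subsingleton (EX R B Z (j + 1))] :
    Subsingleton (EX R C Z (j + 1)) := by
  refine subsingleton_of_forall_eq 0 fun ξ => ?_
  obtain ⟨y, rfl⟩ := Ext.contravariant_sequence_exact₃ (shortExact_of hf hg h) (ModuleCat.of R Z) ξ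
    (Subsingleton.elim (α := EX R B Z (j + 1)) _ _) (add_comm 1 j)
  rw [Subsingleton.elim (α := EX R A Z j) y 0, Ext.comp_zero]

end LES

lemma subsingleton_injective (I : ModuleCat.{0} R) [Injective I] (j : ℕ) :
    Subsingleton (EX R X I (j + 1)) :=
  subsingleton_of_forall_eq 0 fun ξ => Ext.eq_zero_of_injective (I := I) ξ

lemma subsingleton_free (j : ℕ) : Subsingleton (EX R R Z (j + 1)) :=
  subsingleton_of_forall_eq 0 fun ξ => Ext.eq_zero_of_projective ξ

lemma subsingleton_of_target [Subsingleton Z] (j : ℕ) : Subsingleton (EX R X Z j) := by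
  refine subsingleton_of_forall_eq 0 fun ξ => ?_
  rw [← post_id j ξ, show (LinearMap.id : Z →ₗ[R] Z) = 0 from Subsingleton.elim _ _]
  simp

/-- Comparison of the derived functor `Ext` with the `Ext` groups of the derived category. -/
lemma subsingleton_of_derived (A Z : Type) [AddCommGroup A] [Module R A] [AddCommGroup Z]
    [Module R Z] (j : ℕ)
    (h : Subsingleton (((Ext R (ModuleCat.{0} R) (j + 1)).obj (op (ModuleCat.of R A))).obj
      (ModuleCat.of R Z))) : Subsingleton (EX R A Z (j + 1)) := by
  let P := projectiveResolution (ModuleCat.of R A)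
  have h1 : IsZero ((P.complex.linearYonedaObj R (ModuleCat.of R Z)).homology (j + 1)) :=
    (ModuleCat.isZero_of_subsingleton _).of_iso
      (P.isoExt (R := R) (j + 1) (ModuleCat.of R Z)).symm
  rw [← HomologicalComplex.exactAt_iff_isZero_homology,
    HomologicalComplex.exactAt_iff' _ j (j + 1) (j + 2) (by simp) (by simp),
    ShortComplex.moduleCat_exact_iff] at h1
  refine subsingleton_of_forall_eq 0 fun ξ => ?_
  obtain ⟨f, hf, rfl⟩ := P.extMk_surjective ξ (j + 2) rfl
  rw [P.extMk_eq_zero_iff _ _ _ _ j rfl]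
  exact h1 f hf

end

/-! ### Syzygies of the residue field and modules of finite injective dimension -/

section
variable {R : Type} [CommRing R]
variable {A B C X Z W : Type} [AddCommGroup A] [Module R A] [AddCommGroup B] [Module R B]
  [AddCommGroup C] [Module R C] [AddCommGroup X] [Module R X] [AddCommGroup Z] [Module R Z]
  [AddCommGroup W] [Module R W]

/-- Multiplication on `Ω` by each element of `I` lifts through `π : F → Ω`. It is used for surjective
`π` with `F` finite free. -/
def Lifts (I : Ideal R) {F Ω : Type} [AddCommGroup F] [Module R F] [AddCommGroup Ω] [Module R Ω]
    (π : F →ₗ[R] Ω) : Prop :=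
  ∀ x ∈ I, ∃ g : Ω →ₗ[R] F, π ∘ₗ g = x • LinearMap.id

/-- `Ω` admits a cover by a finite free module through which multiplication by each element of `I`
factors. -/
def Good (I : Ideal R) (Ω : Type) [AddCommGroup Ω] [Module R Ω] : Prop :=
  ∃ (n : ℕ) (π : (Fin n → R) →ₗ[R] Ω), Function.Surjective π ∧ Lifts I π

/-- If `x` lifts to `g : Ω → F`, then `x - gπ` maps `F` to `ker π` and restricts to multiplication by
`x` there; so the property passes to syzygies. -/
lemma Lifts.good_ker [IsNoetherianRing R] {I : Ideal R} {F Ω : Type} [AddCommGroup F] [Module R F]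
    [AddCommGroup Ω] [Module R Ω] [Module.Finite R F] [Module.Projective R F] {π : F →ₗ[R] Ω}
    (h : Lifts I π) : Good I (LinearMap.ker π) := by
  obtain ⟨n, π', hπ'⟩ := Module.Finite.exists_fin' R (LinearMap.ker π)
  refine ⟨n, π', hπ', fun x hx => ?_⟩
  obtain ⟨g, hg⟩ := h x hx
  have hg' : ∀ w, π (g w) = x • w := fun w => LinearMap.congr_fun hg w
  let u : F →ₗ[R] LinearMap.ker π := LinearMap.codRestrict _ (x • LinearMap.id - g ∘ₗ π) (by
    intro v
    simp [hg'])
  obtain ⟨v, hv⟩ := Module.projective_lifting_property π' u hπ'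
  refine ⟨v ∘ₗ (LinearMap.ker π).subtype, ?_⟩
  rw [← LinearMap.comp_assoc, hv]
  ext w
  simp [u]

/-- Restriction of homomorphisms to the kernel of a cover. -/
abbrev restr {F Ω : Type} [AddCommGroup F] [Module R F] [AddCommGroup Ω] [Module R Ω]
    (π : F →ₗ[R] Ω) (A : Type) [AddCommGroup A] [Module R A] :
    (F →ₗ[R] A) →ₗ[R] (LinearMap.ker π →ₗ[R] A) :=
  LinearMap.lcomp R A (LinearMap.ker π).subtype

/-- The cokernel of `Hom(F, A) → Hom(ker π, A)` is killed by `I`. -/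
lemma Lifts.smul_mem_range {I : Ideal R} {F Ω : Type} [AddCommGroup F] [Module R F]
    [AddCommGroup Ω] [Module R Ω] {π : F →ₗ[R] Ω}
    (h : Lifts I π) {x : R} (hx : x ∈ I) (φ : LinearMap.ker π →ₗ[R] A) :
    x • φ ∈ LinearMap.range (restr π A) := by
  obtain ⟨g, hg⟩ := h x hx
  have hg' : ∀ w, π (g w) = x • w := fun w => LinearMap.congr_fun hg w
  let u : F →ₗ[R] LinearMap.ker π := LinearMap.codRestrict _ (x • LinearMap.id - g ∘ₗ π) (by
    intro v
    simp [hg'])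
  refine ⟨φ ∘ₗ u, ?_⟩
  ext w
  have : u w = x • w := by ext; simp [u]
  simp [this]

/-- Left exactness of `Hom(-, A)`, with the last term replaced by the image. -/
lemma exact_lcomp_restr {F Ω : Type} [AddCommGroup F] [Module R F]
    [AddCommGroup Ω] [Module R Ω] {π : F →ₗ[R] Ω} (hπ : Function.Surjective π) :
    Function.Exact (LinearMap.lcomp R A π) (restr π A).rangeRestrict := by
  intro φ
  constructor
  · intro h
    have h' : φ ∘ₗ (LinearMap.ker π).subtype = 0 := congrArg Subtype.val h
    have hk : LinearMap.ker π ≤ LinearMap.ker φ := fun v hv => LinearMap.congr_fun h' ⟨v, hv⟩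
    let e := π.quotKerEquivOfSurjective hπ
    refine ⟨(LinearMap.ker π).liftQ φ hk ∘ₗ e.symm.toLinearMap, ?_⟩
    ext v
    have : e.symm (π v) = (LinearMap.ker π).mkQ v := by
      rw [LinearEquiv.symm_apply_eq]; rfl
    simp [this]
  · rintro ⟨ψ, rfl⟩
    apply Subtype.ext
    ext w
    simp

lemma subsingleton_hom_fin (n j : ℕ) [Subsingleton (EX R A Z j)] :
    Subsingleton (EX R ((Fin n → R) →ₗ[R] A) Z j) := by
  have := subsingleton_pre_pi (R := R) (A := A) (Z := Z) (j := j) n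
  exact subsingleton_pre_equiv ((Pi.basisFun R (Fin n)).constr R).symm

variable [IsLocalRing R]

/-- A finitely generated module killed by the maximal ideal is a finite power of the residue
field. -/
lemma exists_equiv_residue [Module.Finite R A] (h : ∀ x ∈ maximalIdeal R, ∀ a : A, x • a = 0) :
    ∃ n : ℕ, Nonempty (A ≃ₗ[R] (Fin n → ResidueField R)) := by
  have htors : Module.IsTorsionBySet R A (maximalIdeal R) := fun a x => h x.1 x.2 a
  let : Module (ResidueField R) A := htors.module
  have : IsScalarTower R (ResidueField R) A := htors.isScalarTower
  have : Module.Finite (ResidueField R) A := Module.Finite.of_restrictScalars_finite R _ _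
  exact ⟨_, ⟨(Module.finBasis (ResidueField R) A).equivFun.restrictScalars R⟩⟩

lemma subsingleton_killed [Module.Finite R A] (h : ∀ x ∈ maximalIdeal R, ∀ a : A, x • a = 0)
    (j : ℕ) [Subsingleton (EX R (ResidueField R) Z j)] : Subsingleton (EX R A Z j) := by
  obtain ⟨n, ⟨e⟩⟩ := exists_equiv_residue h
  have := subsingleton_pre_pi (R := R) (A := ResidueField R) (Z := Z) (j := j) n
  exact subsingleton_pre_equiv e

lemma residue_smul_eq_zero {x : R} (hx : x ∈ maximalIdeal R) (a : ResidueField R) : x • a = 0 := by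
  rw [Algebra.smul_def, ResidueField.algebraMap_eq, (residue_eq_zero_iff x).2 hx, zero_mul]

section step
variable [IsNoetherianRing R] {F Ω : Type} [AddCommGroup F] [Module R F] [Module.Finite R F]
    [AddCommGroup Ω] [Module R Ω] {π : F →ₗ[R] Ω} (hl : Lifts (maximalIdeal R) π)
    [Module.Finite R A]
include hl

lemma subsingleton_coker (j : ℕ) [Subsingleton (EX R (ResidueField R) Z j)] :
    Subsingleton (EX R ((LinearMap.ker π →ₗ[R] A) ⧸ LinearMap.range (restr π A)) Z j) := by
  apply subsingleton_killed
  intro x hx a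
  obtain ⟨φ, rfl⟩ := Submodule.mkQ_surjective _ a
  rw [← map_smul]
  exact (Submodule.Quotient.mk_eq_zero _).2 (hl.smul_mem_range hx φ)

lemma surj_range_subtype (j : ℕ) [Subsingleton (EX R (ResidueField R) Z (j + 1))] :
    Function.Surjective (pre Z j (LinearMap.range (restr π A)).subtype) := by
  have := subsingleton_coker (Z := Z) (A := A) hl (j + 1)
  exact pre_surj_left (Subtype.val_injective) (Submodule.mkQ_surjective _)
    (LinearMap.exact_subtype_mkQ _) j

/-- The basic dimension shift along `0 → Hom(Ω, A) → Hom(F, A) → Hom(ker π, A) → E → 0`, where `E`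
is killed by the maximal ideal. -/
lemma subsingleton_hom_step (hπ : Function.Surjective π) (j : ℕ)
    [Subsingleton (EX R (F →ₗ[R] A) Z j)]
    [Subsingleton (EX R (LinearMap.ker π →ₗ[R] A) Z (j + 1))]
    [Subsingleton (EX R (ResidueField R) Z (j + 2))] :
    Subsingleton (EX R (Ω →ₗ[R] A) Z j) := by
  have : Subsingleton (EX R (LinearMap.range (restr π A)) Z (j + 1)) :=
    (surj_range_subtype (Z := Z) (A := A) hl (j + 1)).subsingleton
  exact pre_left (LinearMap.lcomp_injective_of_surjective π hπ)
    (LinearMap.surjective_rangeRestrict _) (exact_lcomp_restr hπ) j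

lemma pre_restr_surj (hπ : Function.Surjective π) (j : ℕ)
    [Subsingleton (EX R (Ω →ₗ[R] A) Z j)]
    [Subsingleton (EX R (ResidueField R) Z (j + 1))] :
    Function.Surjective (pre Z j (restr π A)) := by
  have h1 := surj_range_subtype (Z := Z) (A := A) hl j
  have h2 := pre_surj_right (Z := Z) (LinearMap.lcomp_injective_of_surjective (S := R) (N := A) π hπ)
    (LinearMap.surjective_rangeRestrict _) (exact_lcomp_restr hπ) j
  intro ξ
  obtain ⟨η, rfl⟩ := h2 ξ
  obtain ⟨ζ, rfl⟩ := h1 η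
  exact ⟨ζ, by rw [← pre_comp]; rfl⟩

end step

lemma lifts_residue {F : Type} [AddCommGroup F] [Module R F] (π : F →ₗ[R] ResidueField R) :
    Lifts (maximalIdeal R) π := fun x hx => ⟨0, by
      ext w
      simp [residue_smul_eq_zero hx]⟩

lemma good_residue : Good (maximalIdeal R) (ResidueField R) := by
  obtain ⟨n, π, hπ⟩ := Module.Finite.exists_fin' R (ResidueField R)
  exact ⟨n, π, hπ, lifts_residue π⟩

/-- Suppose `Z` has finite injective dimension and `Ext^j(A, Z) = 0` for `j > e`. If vanishing of
`Ext^j(k, Z)` for `j > e` follows from vanishing of `Ext^j(Hom(k, A), Z)`, then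
`Ext^j(Hom(Ω, A), Z) = 0` for all `j > e` and every good `Ω`. The proof is a descending induction on
`j` starting above the injective dimension of `Z`; since `k` is itself good, the vanishing for `k`
needed in degree `j + 2` comes from the induction hypothesis. -/
lemma subsingleton_hom_good [IsNoetherianRing R] [Module.Finite R A] (e n₀ : ℕ)
    (hZ : ∀ (X : Type) [AddCommGroup X] [Module R X], ∀ j > n₀, Subsingleton (EX R X Z j))
    (hA : ∀ j > e, Subsingleton (EX R A Z j))
    (hk : ∀ j > e, Subsingleton (EX R (ResidueField R →ₗ[R] A) Z j) →
      Subsingleton (EX R (ResidueField R) Z j))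
    (j : ℕ) (hj : e < j) (Ω : Type) [AddCommGroup Ω] [Module R Ω]
    (hΩ : Good (maximalIdeal R) Ω) : Subsingleton (EX R (Ω →ₗ[R] A) Z j) := by
  have key : ∀ t j : ℕ, e < j → n₀ < j + t → ∀ (Ω : Type) [AddCommGroup Ω] [Module R Ω],
      Good (maximalIdeal R) Ω → Subsingleton (EX R (Ω →ₗ[R] A) Z j) := by
    intro t
    induction t with
    | zero => exact fun j _ h Ω _ _ _ => hZ _ j (by lia)
    | succ t ih =>
      intro j hj ht Ω _ _ hΩ
      obtain ⟨n, π, hπ, hl⟩ := hΩ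
      have := hA j hj
      have := subsingleton_hom_fin (R := R) (A := A) (Z := Z) n j
      have := ih (j + 1) (by lia) (by lia) _ hl.good_ker
      have := hk (j + 2) (by lia) (ih (j + 2) (by lia) (by lia) _ good_residue)
      exact subsingleton_hom_step hl hπ j
  exact key (n₀ + 1) j hj (by lia) Ω hΩ

/-- A finitely generated module with no regular element in the maximal ideal has nonzero socle. -/
lemma nontrivial_socle [IsNoetherianRing R] [Module.Finite R A]
    (h : ∀ x ∈ maximalIdeal R, ¬ IsSMulRegular A x) : Nontrivial (ResidueField R →ₗ[R] A) := by
  rw [← not_subsingleton_iff_nontrivial, IsSMulRegular.subsingleton_linearMap_iff]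
  rintro ⟨x, hx, hr⟩
  refine h x ?_ hr
  have := Module.mem_annihilator.1 hx (1 : ResidueField R)
  rwa [Algebra.smul_def, mul_one, ResidueField.algebraMap_eq, residue_eq_zero_iff] at this

/-- If `A` has depth zero, `Z` has finite injective dimension and `Ext^j(A, Z) = 0` for `j > e`, then
`Ext^j(k, Z) = 0` for `j > e`: the residue field `k` is a direct summand of `Hom(k, A)`, which is
covered by the descending induction. -/
lemma subsingleton_residue [IsNoetherianRing R] [Module.Finite R A] (e n₀ : ℕ)
    (hZ : ∀ (X : Type) [AddCommGroup X] [Module R X], ∀ j > n₀, Subsingleton (EX R X Z j))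
    (hA : ∀ j > e, Subsingleton (EX R A Z j))
    (hreg : ∀ x ∈ maximalIdeal R, ¬ IsSMulRegular A x) (j : ℕ) (hj : e < j) :
    Subsingleton (EX R (ResidueField R) Z j) := by
  have hk : ∀ j > e, Subsingleton (EX R (ResidueField R →ₗ[R] A) Z j) →
      Subsingleton (EX R (ResidueField R) Z j) := by
    intro j _ hs
    have := nontrivial_socle hreg
    obtain ⟨n, ⟨φ⟩⟩ := exists_equiv_residue (R := R) (A := ResidueField R →ₗ[R] A) (by
      intro x hx f
      ext a
      rw [LinearMap.smul_apply, ← map_smul, residue_smul_eq_zero hx, map_zero, LinearMap.zero_apply])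
    have hn : n ≠ 0 := by
      rintro rfl
      exact not_subsingleton _ φ.toEquiv.subsingleton
    obtain ⟨i⟩ : Nonempty (Fin n) := ⟨⟨0, Nat.pos_of_ne_zero hn⟩⟩
    refine subsingleton_pre_retract
      (φ.symm.toLinearMap ∘ₗ LinearMap.single R (fun _ => ResidueField R) i)
      (LinearMap.proj i ∘ₗ φ.toLinearMap) ?_
    ext
    simp
  exact hk j hj (subsingleton_hom_good e n₀ hZ hA hk j hj _ good_residue)

/-- If `Ext^j(k, Z) = 0` for `j > d`, where `Z` has finite injective dimension, and `Ext^j(A, Z) = 0`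
for `j > p` with `p > d`, then `Ext^p(A, Z) = 𝔪 Ext^p(A, Z)`: the map `A → Hom(R^n, A)` induced by
generators of `𝔪` is surjective on `Ext^p(-, Z)`. -/
lemma top_le_smul [IsNoetherianRing R] [Module.Finite R A] (d p n₀ : ℕ) (hp : d < p)
    (hZ : ∀ (X : Type) [AddCommGroup X] [Module R X], ∀ j > n₀, Subsingleton (EX R X Z j))
    (hA : ∀ j > p, Subsingleton (EX R A Z j))
    (hk : ∀ j > d, Subsingleton (EX R (ResidueField R) Z j)) :
    (⊤ : Submodule R (EX R A Z p)) ≤ maximalIdeal R • ⊤ := by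
  -- The cover `R → k`, followed by a cover `R^n → 𝔪`.
  let π := Algebra.linearMap R (ResidueField R)
  have hπ : Function.Surjective π := residue_surjective
  have hl : Lifts (maximalIdeal R) π := lifts_residue π
  obtain ⟨n, π', hπ', hl'⟩ := hl.good_ker
  have := hk p hp
  have := hk (p + 1) (by lia)
  have := hk (p + 2) (by lia)
  have : Subsingleton (EX R (ResidueField R →ₗ[R] A) Z p) := subsingleton_killed (by
      intro x hx f
      ext a
      rw [LinearMap.smul_apply, ← map_smul, residue_smul_eq_zero hx, map_zero,
        LinearMap.zero_apply]) p
  have h1 := pre_restr_surj (Z := Z) (A := A) hl hπ p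
  have h2 : Function.Surjective (pre Z p (LinearMap.lcomp R A π')) := by
    have := subsingleton_hom_good p n₀ hZ hA (fun j hj _ => hk j (by lia)) (p + 1) (by lia) _
      hl'.good_ker
    have : Subsingleton (EX R (LinearMap.range (restr π' A)) Z (p + 1)) :=
      (surj_range_subtype (Z := Z) (A := A) hl' (p + 1)).subsingleton
    exact pre_surj_left (LinearMap.lcomp_injective_of_surjective π' hπ')
      (LinearMap.surjective_rangeRestrict _) (exact_lcomp_restr hπ') p
  let ε : A →ₗ[R] (R →ₗ[R] A) := (LinearMap.ringLmapEquivSelf R R A).symm.toLinearMap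
  have h3 : Function.Surjective (pre Z p ε) := fun ξ =>
    ⟨pre Z p (LinearMap.ringLmapEquivSelf R R A).toLinearMap ξ, by
      rw [← pre_comp, show (LinearMap.ringLmapEquivSelf R R A).toLinearMap ∘ₗ ε = LinearMap.id by
        ext; simp [ε], pre_id]⟩
  -- The composite `A → Hom(R^n, A)` has matrix entries in the maximal ideal.
  let y : Fin n → R := fun i => (π' (Pi.single i 1) : R)
  let L : Fin n → (A →ₗ[R] ((Fin n → R) →ₗ[R] A)) := fun i =>
    (LinearMap.lcomp R A (LinearMap.proj i)) ∘ₗ ε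
  have hL : LinearMap.lcomp R A π' ∘ₗ restr π A ∘ₗ ε = ∑ i, y i • L i := by
    ext a i
    simp [ε, L, y, LinearMap.sum_apply, Pi.single_apply]
  intro ξ _
  obtain ⟨η, rfl⟩ := h3 ξ
  obtain ⟨η, rfl⟩ := h1 η
  obtain ⟨η, rfl⟩ := h2 η
  rw [← pre_comp, ← pre_comp, hL, map_sum, LinearMap.sum_apply]
  refine Submodule.sum_mem _ fun i _ => ?_
  rw [map_smul, LinearMap.smul_apply]
  refine Submodule.smul_mem_smul ?_ trivial
  have : residue R (y i) = 0 := (π' (Pi.single i 1)).2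
  exact (residue_eq_zero_iff _).1 this

end

/-! ### Regular sequences and nonvanishing of `Ext` -/

section
variable {R : Type} [CommRing R]
variable {A Z : Type} [AddCommGroup A] [Module R A] [AddCommGroup Z] [Module R Z]

lemma pre_lsmul (x : R) (j : ℕ) (ξ : EX R A Z j) : pre Z j (LinearMap.lsmul R A x) ξ = x • ξ := by
  rw [show LinearMap.lsmul R A x = x • LinearMap.id by ext; simp, map_smul, LinearMap.smul_apply,
    pre_id]

lemma quotSMulTop_surj (x : R) : Function.Surjective (x • (⊤ : Submodule R A)).mkQ :=
  Submodule.mkQ_surjective _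

/-- Passing to the quotient by a regular element raises the range of nonvanishing of `Ext(-, Z)` by
at most one. -/
lemma subsingleton_quotSMulTop {x : R} (hx : IsSMulRegular A x) (j : ℕ)
    [Subsingleton (EX R A Z j)] [Subsingleton (EX R A Z (j + 1))] :
    Subsingleton (EX R (QuotSMulTop x A) Z (j + 1)) :=
  pre_right (f := LinearMap.lsmul R A x) hx (quotSMulTop_surj x) (LinearMap.exact_lsmul_mkQ_smul_top A x) j

variable [IsLocalRing R]

/-- Killing a regular sequence of length `l` in a module with `Ext^j(A, -) = 0` for `j > e` gives a
module with `Ext^j(A', -) = 0` for `j > e + l`; a regular element on the quotient extends the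
sequence. -/
lemma exists_quotient (rs : List R) (hrs : ∀ r ∈ rs, r ∈ maximalIdeal R) :
    ∀ (A : Type) [AddCommGroup A] [Module R A] [Module.Finite R A] [Nontrivial A] (e : ℕ),
    (∀ (Z : Type) [AddCommGroup Z] [Module R Z], ∀ j > e, Subsingleton (EX R A Z j)) →
    IsRegular A rs → ∃ (A' : Type) (_ : AddCommGroup A') (_ : Module R A'),
      Module.Finite R A' ∧
      (∀ (Z : Type) [AddCommGroup Z] [Module R Z], ∀ j > e + rs.length,
        Subsingleton (EX R A' Z j)) ∧
      ∀ x ∈ maximalIdeal R, IsSMulRegular A' x →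
        ∃ rs' : List R, (∀ r ∈ rs', r ∈ maximalIdeal R) ∧ IsRegular A rs' ∧
          rs'.length = rs.length + 1 := by
  induction rs with
  | nil =>
    intro A _ _ _ _ e hA _
    refine ⟨A, _, _, ‹_›, hA, fun x hx hr => ⟨[x], by simpa using hx, ?_, rfl⟩⟩
    have := nontrivial_quotSMulTop_of_mem_maximalIdeal A hx
    exact IsRegular.cons hr (IsRegular.nil _ _)
  | cons a rs ih =>
    intro A _ _ _ _ e hA h
    obtain ⟨ha, h⟩ := (isRegular_cons_iff _ _ _).1 h
    have := nontrivial_quotSMulTop_of_mem_maximalIdeal A (hrs a (by simp))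
    obtain ⟨A', i1, i2, h1, h2, h3⟩ := ih (fun r hr => hrs r (by simp [hr])) (QuotSMulTop a A)
      (e + 1) (fun Z _ _ j hj => by
        obtain ⟨j, rfl⟩ : ∃ k, j = k + 1 := ⟨j - 1, by lia⟩
        have := hA Z j (by lia)
        have := hA Z (j + 1) (by lia)
        exact subsingleton_quotSMulTop ha j) h
    refine ⟨A', i1, i2, h1, fun Z _ _ j hj => h2 Z j (by rw [List.length_cons] at hj; lia), ?_⟩
    intro x hx hr
    obtain ⟨rs', h4, h5, h6⟩ := h3 x hx hr
    refine ⟨a :: rs', ?_, h5.cons ha, by simp [h6]⟩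
    intro r hr
    rcases List.mem_cons.1 hr with rfl | hr
    · exact hrs _ (by simp)
    · exact h4 r hr

/-- Over a local ring of finite depth `d`, the quotient by a maximal regular sequence has projective
dimension at most `d` and depth zero. -/
lemma exists_depth_witness (d : ℕ) (hd : moduleDepth R R = d) :
    ∃ (A' : Type) (_ : AddCommGroup A') (_ : Module R A'), Module.Finite R A' ∧
      (∀ (Z : Type) [AddCommGroup Z] [Module R Z], ∀ j > d, Subsingleton (EX R A' Z j)) ∧
      ∀ x ∈ maximalIdeal R, ¬ IsSMulRegular A' x := by
  have hle : ∀ rs : List R, (∀ r ∈ rs, r ∈ maximalIdeal R) → IsRegular R rs → rs.length ≤ d := by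
    intro rs h1 h2
    have := le_iSup (fun rs : {l : List R // (∀ r ∈ l, r ∈ maximalIdeal R) ∧ IsRegular R l} =>
      (rs.1.length : ℕ∞)) ⟨rs, h1, h2⟩
    rw [moduleDepth, idealDepth] at hd
    rw [hd] at this
    exact_mod_cast this
  obtain ⟨⟨rs, h1, h2⟩, h3⟩ : ∃ rs : {l : List R // (∀ r ∈ l, r ∈ maximalIdeal R) ∧ IsRegular R l},
      (rs.1.length : ℕ∞) = d := by
    have : Nonempty {l : List R // (∀ r ∈ l, r ∈ maximalIdeal R) ∧ IsRegular R l} :=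
      ⟨⟨[], by simp, IsRegular.nil _ _⟩⟩
    rw [← hd]
    exact ENat.exists_eq_iSup_of_lt_top (by
      rw [moduleDepth, idealDepth] at hd; rw [hd]; exact ENat.natCast_lt_top d)
  have h3 : rs.length = d := by exact_mod_cast h3
  obtain ⟨A', i1, i2, h4, h5, h6⟩ := exists_quotient rs h1 R 0 (fun Z _ _ j hj => by
    obtain ⟨j, rfl⟩ : ∃ k, j = k + 1 := ⟨j - 1, by lia⟩
    exact subsingleton_free j) h2
  refine ⟨A', i1, i2, h4, fun Z _ _ j hj => h5 Z j (by lia), fun x hx hr => ?_⟩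
  obtain ⟨rs', h7, h8, h9⟩ := h6 x hx hr
  have := hle rs' h7 h8
  lia

/-- For nonzero finitely generated modules over a Noetherian local ring, some `Ext^p(M, N)` is
nonzero. -/
lemma exists_nontrivial_ext [IsNoetherianRing R] (M N : Type) [AddCommGroup M] [Module R M]
    [AddCommGroup N] [Module R N] [Module.Finite R M] [Module.Finite R N] [Nontrivial M]
    [Nontrivial N] : ∃ p, Nontrivial (EX R M N p) := by
  have key : ∀ L : Submodule R N, (∀ j, Subsingleton (EX R M (N ⧸ L) j)) →
      Subsingleton (N ⧸ L) := by
    intro L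
    induction L using WellFoundedGT.induction with
    | ind L ih =>
    intro h
    by_contra hn
    rw [not_subsingleton_iff_nontrivial] at hn
    have h0 : Subsingleton (M →ₗ[R] (N ⧸ L)) :=
      have := h 0
      ((Ext.linearEquiv₀ (R := R) (X := ModuleCat.of R M) (Y := ModuleCat.of R (N ⧸ L))).trans
        ModuleCat.homLinearEquiv).symm.toEquiv.subsingleton
    obtain ⟨y, hy, hr⟩ := IsSMulRegular.subsingleton_linearMap_iff.1 h0
    have hym : y ∈ maximalIdeal R := by
      refine (mem_maximalIdeal _).2 fun hu => ?_
      obtain ⟨m, hm⟩ := exists_ne (0 : M)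
      exact hm ((IsUnit.smul_eq_zero hu).1 (Module.mem_annihilator.1 hy m))
    let Q := QuotSMulTop y (N ⧸ L)
    have : Nontrivial Q := nontrivial_quotSMulTop_of_mem_maximalIdeal (N ⧸ L) hym
    let f : N →ₗ[R] Q := (y • (⊤ : Submodule R (N ⧸ L))).mkQ ∘ₗ L.mkQ
    have hf : Function.Surjective f := (quotSMulTop_surj y).comp (Submodule.mkQ_surjective _)
    let e : (N ⧸ LinearMap.ker f) ≃ₗ[R] Q := f.quotKerEquivOfSurjective hf
    have hlt : L < LinearMap.ker f := by
      refine lt_of_le_of_ne (fun v hv => ?_) fun he => ?_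
      · have : L.mkQ v = 0 := (Submodule.Quotient.mk_eq_zero _).2 hv
        simp [f, this]
      · obtain ⟨v, hv⟩ := exists_ne (0 : N ⧸ L)
        obtain ⟨v, rfl⟩ := Submodule.mkQ_surjective _ v
        have h1 : (y • v) ∈ LinearMap.ker f := by
          change (y • (⊤ : Submodule R (N ⧸ L))).mkQ (L.mkQ (y • v)) = 0
          rw [map_smul]
          exact (Submodule.Quotient.mk_eq_zero _).2
            (Submodule.smul_mem_pointwise_smul _ _ _ trivial)
        rw [← he] at h1
        have h2 : y • L.mkQ v = y • (0 : N ⧸ L) := by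
          rw [← map_smul, smul_zero]
          exact (Submodule.Quotient.mk_eq_zero _).2 h1
        exact hv (hr h2)
    have hQ : ∀ j, Subsingleton (EX R M Q j) := fun j =>
      have := h j
      have := h (j + 1)
      post_right (X := M) (f := LinearMap.lsmul R (N ⧸ L) y) hr (quotSMulTop_surj y) (LinearMap.exact_lsmul_mkQ_smul_top _ y) j
    have := ih _ hlt fun j =>
      have := hQ j
      subsingleton_post_equiv e
    exact not_subsingleton Q e.symm.toEquiv.subsingleton
  by_contra! hc
  have := key ⊥ fun j =>
    have := hc j
    subsingleton_post_equiv (Submodule.quotEquivOfEqBot ⊥ rfl)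
  exact not_subsingleton N (Submodule.quotEquivOfEqBot (⊥ : Submodule R N) rfl).symm.toEquiv.subsingleton

end

/-! ### Quasi-injective resolutions and Ischebeck's argument -/

section
variable {R : Type} [CommRing R]

/-- The cycles of `I` in degree `i + 1`. -/
abbrev Cyc (I : ChainComplex (ModuleCat.{0} R) ℤ) (i : ℤ) : Submodule R (I.X (i + 1)) :=
  LinearMap.ker (I.d (i + 1) i).hom

/-- The boundaries of `I` in degree `i`. -/
abbrev Bdry (I : ChainComplex (ModuleCat.{0} R) ℤ) (i : ℤ) : Submodule R (I.X i) :=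
  LinearMap.range (I.d (i + 1) i).hom

variable {I : ChainComplex (ModuleCat.{0} R) ℤ} {A Z N : Type} [AddCommGroup A] [Module R A]
  [AddCommGroup Z] [Module R Z] [AddCommGroup N] [Module R N]

lemma exact_cyc_bdry (i : ℤ) :
    Function.Exact (Cyc I i).subtype (I.d (i + 1) i).hom.rangeRestrict := by
  rw [LinearMap.exact_iff, LinearMap.ker_rangeRestrict, Submodule.range_subtype]

/-- The exact sequence `0 → B_{i+1} → Z_{i+1} → H_{i+1} → 0`. -/
lemma exists_bdry_cyc (i : ℤ) (e : I.homology (i + 1) ≅ ModuleCat.of R Z) :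
    ∃ (f : Bdry I (i + 1) →ₗ[R] Cyc I i) (q : Cyc I i →ₗ[R] Z), Function.Injective f ∧
      Function.Surjective q ∧ Function.Exact f q := by
  let S := I.sc' (i + 1 + 1) (i + 1) i
  let e₁ : I.homology (i + 1) ≅ S.homology :=
    I.homologyIsoSc' (i + 1 + 1) (i + 1) i (by simp) (by simp)
  let Q : Submodule R (Cyc I i) := LinearMap.range S.moduleCatToCycles
  let e₂ : (Cyc I i ⧸ Q) ≃ₗ[R] Z :=
    ((e₁ ≪≫ S.moduleCatHomologyIso).symm ≪≫ e).toLinearEquiv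
  have hle : ∀ w : Bdry I (i + 1), (w : I.X (i + 1)) ∈ Cyc I i := by
    rintro ⟨_, v, rfl⟩
    exact S.moduleCat_zero_apply v
  let f : Bdry I (i + 1) →ₗ[R] Cyc I i := LinearMap.codRestrict _ (Submodule.subtype _) hle
  refine ⟨f, e₂.toLinearMap ∘ₗ Q.mkQ, ?_, ?_, ?_⟩
  · intro v w h
    exact Subtype.ext (congrArg (Cyc I i).subtype h)
  · exact e₂.surjective.comp (Submodule.mkQ_surjective _)
  · intro v
    rw [LinearMap.comp_apply, LinearEquiv.coe_coe, e₂.map_eq_zero_iff, Submodule.mkQ_apply,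
      Submodule.Quotient.mk_eq_zero]
    constructor
    · rintro ⟨w, rfl⟩
      exact ⟨⟨_, w, rfl⟩, rfl⟩
    · rintro ⟨⟨_, w, rfl⟩, rfl⟩
      exact ⟨w, rfl⟩

/-- Vanishing of `Ext^j(A, H_i)` for `j > p` propagates down a bounded above complex of injectives. -/
lemma subsingleton_cyc_bdry (hI : ∀ i, Injective (I.X i)) {n : ℤ} (hn : ∀ i > n, IsZero (I.X i))
    {b : ℤ → ℕ} (hb : ∀ i, Nonempty (I.homology i ≅ ModuleCat.of R (Fin (b i) → N))) {p : ℕ}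
    (hA : ∀ j > p, Subsingleton (EX R A N j)) (t : ℕ) : ∀ i : ℤ, n < i + t →
    (∀ j ≥ p, 1 ≤ j → Subsingleton (EX R A (Bdry I i) j)) ∧
      ∀ j > p, Subsingleton (EX R A (Cyc I i) j) := by
  induction t with
  | zero =>
    intro i hi
    have h1 : Subsingleton (I.X i) := ModuleCat.subsingleton_of_isZero (hn i (by lia))
    have h2 : Subsingleton (I.X (i + 1)) := ModuleCat.subsingleton_of_isZero (hn (i + 1) (by lia))
    exact ⟨fun j _ _ => subsingleton_of_target j, fun j _ => subsingleton_of_target j⟩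
  | succ t ih =>
    intro i hi
    have h1 := (ih (i + 1) (by push_cast at hi; lia)).1
    obtain ⟨e⟩ := hb (i + 1)
    obtain ⟨f, q, hf, hq, hfq⟩ := exists_bdry_cyc i e
    have h2 : ∀ j > p, Subsingleton (EX R A (Cyc I i) j) := fun j hj =>
      have := h1 j (by lia) (by lia)
      have := hA j hj
      have := subsingleton_post_pi (R := R) (X := A) (A := N) (j := j) (b (i + 1))
      post_mid hf hq hfq j
    refine ⟨fun j hj hj1 => ?_, h2⟩
    obtain ⟨j, rfl⟩ : ∃ k, j = k + 1 := ⟨j - 1, by lia⟩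
    have := h2 (j + 1 + 1) (by lia)
    have := hI (i + 1)
    have := subsingleton_injective (X := A) (I.X (i + 1)) j
    exact post_right (X := A) (Subtype.val_injective) (LinearMap.surjective_rangeRestrict _)
      (exact_cyc_bdry i) (j + 1)

/-- Below the lowest degree with nonzero homology, the cycles of a bounded complex of injectives have
finite injective dimension. -/
lemma exists_injdim_cyc (hI : ∀ i, Injective (I.X i)) {m : ℤ} (hm : ∀ i < m, IsZero (I.X i))
    (t : ℕ) : ∀ i : ℤ, i + 1 < m + t → (∀ k ≤ i, IsZero (I.homology k)) →
    ∃ n₀ : ℕ, ∀ (X : Type) [AddCommGroup X] [Module R X], ∀ j > n₀,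
      Subsingleton (EX R X (Cyc I i) j) := by
  induction t with
  | zero =>
    intro i hi _
    have h2 : Subsingleton (I.X (i + 1)) := ModuleCat.subsingleton_of_isZero (hm (i + 1) (by lia))
    exact ⟨0, fun X _ _ j _ => subsingleton_of_target j⟩
  | succ t ih =>
    intro i hi hk
    obtain ⟨i, rfl⟩ : ∃ k, i = k + 1 := ⟨i - 1, by lia⟩
    obtain ⟨n₀, h0⟩ := ih i (by push_cast at hi; lia) fun k hk' => hk k (by lia)
    have e : I.homology (i + 1) ≅ ModuleCat.of R PUnit :=
      (hk (i + 1) le_rfl).iso (ModuleCat.isZero_of_subsingleton _)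
    obtain ⟨f, q, hf, hq, hfq⟩ := exists_bdry_cyc i e
    have hfs : Function.Surjective f := fun v => (hfq v).1 (Subsingleton.elim _ _)
    refine ⟨n₀ + 1, fun X _ _ j hj => ?_⟩
    obtain ⟨j, rfl⟩ : ∃ k, j = k + 1 := ⟨j - 1, by lia⟩
    have := h0 X j (by lia)
    have : Subsingleton (EX R X (Bdry I (i + 1)) j) :=
      subsingleton_post_equiv (LinearEquiv.ofBijective f ⟨hf, hfs⟩)
    have := hI (i + 1 + 1)
    have := subsingleton_injective (X := X) (I.X (i + 1 + 1)) j
    exact post_left (X := X) (Subtype.val_injective) (LinearMap.surjective_rangeRestrict _)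
      (exact_cyc_bdry (i + 1)) j

/-- A module `N` of finite quasi-injective dimension is compared with a module `Z` of finite injective
dimension: if `Ext^j(A, N) = 0` for `j > p` and `p ≥ 1`, then the same holds for `Z` and
`Ext^p(A, Z) ≅ Ext^p(A, N^b)` for some `b > 0`. Here `Z` is the module of cycles in the lowest degree
with nonzero homology of a quasi-injective resolution. -/
lemma exists_comparison [Nontrivial N] (hq : qid R N ≠ ⊤) :
    ∃ (Z : Type) (_ : AddCommGroup Z) (_ : Module R Z) (n₀ b : ℕ), 0 < b ∧
      (∀ (X : Type) [AddCommGroup X] [Module R X], ∀ j > n₀, Subsingleton (EX R X Z j)) ∧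
      ∀ (A : Type) [AddCommGroup A] [Module R A] (p : ℕ), 1 ≤ p →
        (∀ j > p, Subsingleton (EX R A N j)) → (∀ j > p, Subsingleton (EX R A Z j)) ∧
          Nonempty (EX R A Z p ≃ₗ[R] EX R A (Fin b → N) p) := by
  obtain ⟨_, ⟨_, -, I, ⟨hI, ⟨n, hn⟩, b, ⟨i₁, hi₁⟩, hb⟩, h, -, hm⟩⟩ :
      {c : ℕ∞ | ∃ n : ℕ, c = n ∧ ∃ I : ChainComplex (ModuleCat.{0} R) ℤ, IsQuasiInjRes R I N ∧
        ∃ h : ℤ, ¬ IsZero (I.homology h) ∧ ∀ i, i < h - n → IsZero (I.X i)}.Nonempty := by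
    by_contra hc
    exact hq (by rw [qid, Set.not_nonempty_iff_eq_empty.1 hc, sInf_empty])
  generalize h - _ = m at hm
  have hb0 : ∀ i, IsZero (I.homology i) → b i = 0 := by
    intro i hi
    by_contra h0
    obtain ⟨e⟩ := hb i
    have hs := ModuleCat.subsingleton_of_isZero (hi.of_iso e.symm)
    have : Nonempty (Fin (b i)) := ⟨⟨0, Nat.pos_of_ne_zero h0⟩⟩
    exact not_subsingleton (Fin (b i) → N) hs
  obtain ⟨l, hl, hmin⟩ := Int.exists_least_of_bdd (P := fun i => 0 < b i) ⟨m, fun i hi => by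
    by_contra! hc
    have h1 : IsZero (I.homology i) := by
      rw [← HomologicalComplex.exactAt_iff_isZero_homology]
      exact ShortComplex.exact_of_isZero_X₂ _ (hm i hc)
    have := hb0 i h1
    lia⟩ ⟨i₁, hi₁⟩
  obtain ⟨i, rfl⟩ : ∃ k, l = k + 1 := ⟨l - 1, by lia⟩
  obtain ⟨n₀, hn₀⟩ := exists_injdim_cyc hI hm (i + 2 - m).toNat i (by lia) fun k hk => by
    obtain ⟨e⟩ := hb k
    have h0 : b k = 0 := by
      by_contra h0
      have := hmin k (Nat.pos_of_ne_zero h0)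
      lia
    rw [h0] at e
    exact (ModuleCat.isZero_of_subsingleton _).of_iso e
  refine ⟨Cyc I i, _, _, n₀, b (i + 1), hl, hn₀, fun A _ _ p hp hA => ?_⟩
  have h1 := (subsingleton_cyc_bdry hI hn hb hA (n + 1 - i).toNat i (by lia)).2
  have h2 := (subsingleton_cyc_bdry hI hn hb hA (n + 1 - i).toNat (i + 1) (by lia)).1
  refine ⟨h1, ?_⟩
  obtain ⟨e⟩ := hb (i + 1)
  obtain ⟨f, q, hf, hq, hfq⟩ := exists_bdry_cyc i e
  have := h2 p le_rfl hp
  have := h2 (p + 1) (by lia) (by lia)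
  exact ⟨LinearEquiv.ofBijective (post A p q) ⟨post_inj hf hq hfq p, post_surj hf hq hfq p⟩⟩

variable [IsNoetherianRing R] [IsLocalRing R]

/-- Over a local ring of depth `d`, a module of finite quasi-injective dimension satisfies: if the
supremum of the degrees with `Ext^p(A, N) ≠ 0` is finite, it is at most `d`. -/
lemma top_ext_le [Module.Finite R N] [Nontrivial N] (hq : qid R N ≠ ⊤) (d : ℕ)
    (hd : moduleDepth R R = d) (A : Type) [AddCommGroup A] [Module R A] [Module.Finite R A]
    (p : ℕ) (hA : ∀ j > p, Subsingleton (EX R A N j)) (hp : Nontrivial (EX R A N p)) : p ≤ d := by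
  by_contra! hdp
  obtain ⟨W, _, _, _, hW, hreg⟩ := exists_depth_witness d hd
  obtain ⟨Z, _, _, n₀, b, hb, hZ, hcomp⟩ := exists_comparison (N := N) hq
  obtain ⟨hAZ, ⟨e⟩⟩ := hcomp A p (by lia) hA
  have hk := subsingleton_residue d n₀ hZ (hW Z) hreg
  have htop := top_le_smul d p n₀ hdp hZ hAZ hk
  have : Module.Finite R (EX R A Z p) := Module.Finite.equiv e.symm
  have h0 : (⊤ : Submodule R (EX R A Z p)) = ⊥ :=
    Submodule.eq_bot_of_le_smul_of_le_jacobson_bot _ _ Module.Finite.fg_top htop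
      (maximalIdeal_le_jacobson _)
  have : Subsingleton (EX R A Z p) := (Submodule.subsingleton_iff R).1 (subsingleton_of_bot_eq_top h0.symm)
  have : Subsingleton (EX R A (Fin b → N) p) := e.symm.toEquiv.subsingleton
  have : Subsingleton (EX R A N p) :=
    subsingleton_post_retract (LinearMap.single R (fun _ : Fin b => N) ⟨0, hb⟩)
      (LinearMap.proj ⟨0, hb⟩) (by ext; simp)
  exact not_subsingleton (EX R A N p) this

/-- An inductive form of Ischebeck's argument: dividing by a regular element moves the top nonvanishing
degree of `Ext(-, N)` up by exactly one. -/
lemma add_length_le [Module.Finite R N] [Nontrivial N] (hq : qid R N ≠ ⊤) (d : ℕ)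
    (hd : moduleDepth R R = d) (rs : List R) (hrs : ∀ r ∈ rs, r ∈ maximalIdeal R) :
    ∀ (A : Type) [AddCommGroup A] [Module R A] [Module.Finite R A] (p : ℕ),
    (∀ j > p, Subsingleton (EX R A N j)) → Nontrivial (EX R A N p) → IsRegular A rs →
    p + rs.length ≤ d := by
  induction rs with
  | nil => exact fun A _ _ _ p hA hp _ => top_ext_le hq d hd A p hA hp
  | cons a rs ih =>
    intro A _ _ _ p hA hp h
    obtain ⟨ha, h⟩ := (isRegular_cons_iff _ _ _).1 h
    have := ih (fun r hr => hrs r (by simp [hr])) (QuotSMulTop a A) (p + 1) (fun j hj => by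
        obtain ⟨j, rfl⟩ : ∃ k, j = k + 1 := ⟨j - 1, by lia⟩
        have := hA j (by lia)
        have := hA (j + 1) (by lia)
        exact subsingleton_quotSMulTop ha j) (by
        by_contra hc
        rw [not_nontrivial_iff_subsingleton] at hc
        have hs := pre_surj_left (Z := N) (f := LinearMap.lsmul R A a) ha (quotSMulTop_surj a)
          (LinearMap.exact_lsmul_mkQ_smul_top A a) p
        have : Module.Finite R (EX R A N p) := inferInstance
        have h0 : (⊤ : Submodule R (EX R A N p)) = ⊥ :=
          Submodule.eq_bot_of_le_smul_of_le_jacobson_bot (maximalIdeal R) _ Module.Finite.fg_top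
            (fun ξ _ => by
              obtain ⟨η, rfl⟩ := hs ξ
              rw [pre_lsmul]
              exact Submodule.smul_mem_smul (hrs a (by simp)) trivial)
            (maximalIdeal_le_jacobson _)
        exact bot_ne_top h0.symm) h
    rw [List.length_cons]
    lia

end

end QidDepth

/-- If `sup{i | Ext^i(M,N) ≠ 0} < ∞` and `qid_R N < ∞`, then `depth M ≤ depth R`. -/
theorem stmt7 (R : Type) [CommRing R] [IsNoetherianRing R] [IsLocalRing R]
    (M N : Type) [AddCommGroup M] [Module R M] [AddCommGroup N] [Module R N]
    [Module.Finite R M] [Module.Finite R N] (hM : Nontrivial M) (hN : Nontrivial N)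
    (hsup : extSup R M N ≠ ⊤) (hqid : qid R N ≠ ⊤) :
    moduleDepth R M ≤ moduleDepth R R := by
  by_cases hR : moduleDepth R R = ⊤
  · simp [hR]
  obtain ⟨d, hd⟩ := ENat.ne_top_iff_exists.1 hR
  obtain ⟨s, hs⟩ := ENat.ne_top_iff_exists.1 hsup
  have hvan : ∀ j > s, Subsingleton (QidDepth.EX R M N j) := by
    intro j hj
    obtain ⟨j, rfl⟩ : ∃ k, j = k + 1 := ⟨j - 1, by lia⟩
    refine QidDepth.subsingleton_of_derived M N j ?_
    by_contra hc
    rw [not_subsingleton_iff_nontrivial] at hc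
    have : ((j + 1 : ℕ) : ℕ∞) ≤ extSup R M N := le_sSup ⟨j + 1, rfl, hc⟩
    rw [← hs] at this
    have : j + 1 ≤ s := by exact_mod_cast this
    lia
  obtain ⟨p₀, hp₀⟩ := QidDepth.exists_nontrivial_ext (R := R) M N
  -- The largest degree with nonvanishing `Ext`.
  obtain ⟨p, hp, hmax⟩ : ∃ p, Nontrivial (QidDepth.EX R M N p) ∧
      ∀ j > p, Subsingleton (QidDepth.EX R M N j) := by
    classical
    have hle : p₀ ≤ s := by
      by_contra! hc
      exact not_nontrivial_iff_subsingleton.2 (hvan p₀ hc) hp₀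
    refine ⟨Nat.findGreatest (fun p => Nontrivial (QidDepth.EX R M N p)) s,
      Nat.findGreatest_spec (P := fun p => Nontrivial (QidDepth.EX R M N p)) hle hp₀,
      fun j hj => ?_⟩
    by_cases hjs : j ≤ s
    · exact not_nontrivial_iff_subsingleton.1
        (Nat.findGreatest_is_greatest (P := fun p => Nontrivial (QidDepth.EX R M N p)) hj hjs)
    · exact hvan j (by lia)
  rw [← hd]
  refine iSup_le fun ⟨rs, h1, h2⟩ => ?_
  have := QidDepth.add_length_le hqid d hd.symm rs h1 M p hmax hp h2
  exact_mod_cast (by lia : rs.length ≤ d)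
end

section
/- Let R be a Noetherian local ring, M a nonzero finitely generated R-module of finite quasi-projective dimension, and x ∈ m an R-regular element with xM = 0. Then for suitable n ≥ 1 with qpd_{R/(x^n)} M < ∞, one has qpd_{R/(x^n)} M = qpd_R M − 1. -/
/-!
The result rests on the Auslander–Buchsbaum formula `qpd M = depth R - depth M`, over `R` and over
`R / (xⁿ)`: passing from `R` to `R / (xⁿ)` leaves the depth of `M` unchanged and lowers the depth of
the ring by one. Since `qpd` allows infinitely generated projectives, depth is
measured by the vanishing of `Ext^i(k, -)`, written `DepthGE`; it agrees with the definition
through regular sequences for finitely generated modules, by the Rees theorem.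

For a quasi-projective resolution `P` put `B i` for the boundaries and `W i = X i / B i`, and let
`s` be the top degree with nonzero homology. Depth is estimated along the exact sequences
`0 → B i → Z i → H i → 0`, `0 → Z i → X i → B (i - 1) → 0` and `0 → H i → W i → B (i - 1) → 0`,
starting from the bottom of `P`, and along `0 → W (i + 1) → X i → W i → 0` for `i ≥ s`.

* If `P` vanishes above `s + q`, descending from `W (s + q) = X (s + q)` to `H s`, which is a
  nonzero power of `M`, gives `depth R - q ≤ depth M` (`depthGE_of_resolution`).
* If `q > 0` is minimal, then `W (s + q - 1)` is not projective, since otherwise the canonical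
  truncation of `P` (`exists_truncation`) would be a shorter resolution. It has projective
  dimension one, and a depth bounded below in terms of those of `R` and `M`. The classical
  Auslander–Buchsbaum formula for this module gives `depth M + q ≤ depth R`
  (`depthGE_ring_of_resolution`).

The last step needs finite generation to have a minimal presentation. The terms of `P` need not be
finitely generated, but Schanuel's lemma shows that all `B i` and `W i` are so up to projective
summands (`StableFG`), which suffices because `W (s + q - 1)` may be replaced by its finitely
generated part.

When `q = 0`, only the first inequality is available. In that case `depth R ≤ depth M`, and the
quotient then also has quasi-projective dimension `0`, in agreement with truncated subtraction;
if the quotient has quasi-projective dimension `0`, then `depth R - 1 ≤ depth M` forces `q ≤ 1`.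
-/

open CategoryTheory CategoryTheory.Limits Opposite

namespace QPD

/-! ### Depth in terms of Ext -/

section Depth

variable {R : Type} [CommRing R] [IsLocalRing R]
  {A B C : Type} [AddCommGroup A] [Module R A] [AddCommGroup B] [Module R B]
  [AddCommGroup C] [Module R C]

variable (R A) in
/-- `A` has depth at least `n`, in the homological form `Ext^i(k, A) = 0` for all `i < n`, where
`k` is the residue field of `R`. Unlike the definition through regular sequences, this is well
behaved for modules which are not finitely generated. -/
def DepthGE (n : ℕ) : Prop :=
  ∀ i < n, Subsingleton (Abelian.Ext.{0} (ModuleCat.of R (IsLocalRing.ResidueField R))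
    (ModuleCat.of R A) i)

lemma DepthGE.mono {m n : ℕ} (h : DepthGE R A n) (hmn : m ≤ n) : DepthGE R A m :=
  fun i hi => h i (hi.trans_le hmn)

lemma depthGE_zero : DepthGE R A 0 := fun i hi => absurd hi (Nat.not_lt_zero i)

omit [IsLocalRing R] in
lemma shortExact_mk (f : A →ₗ[R] B) (g : B →ₗ[R] C) (hf : Function.Injective f)
    (hg : Function.Surjective g) (h : Function.Exact f g) :
    (ShortComplex.mk (ModuleCat.ofHom f) (ModuleCat.ofHom g)
      (by ext x; exact h.apply_apply_eq_zero x)).ShortExact :=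
  ModuleCat.shortComplex_shortExact _ h hf hg

lemma DepthGE.mid (f : A →ₗ[R] B) (g : B →ₗ[R] C) (hf : Function.Injective f)
    (hg : Function.Surjective g) (h : Function.Exact f g) {n : ℕ}
    (hA : DepthGE R A n) (hC : DepthGE R C n) : DepthGE R B n := fun i hi => by
  have := hA i hi
  have := hC i hi
  refine subsingleton_of_forall_eq 0 fun x => ?_
  obtain ⟨y, rfl⟩ := Abelian.Ext.covariant_sequence_exact₂ _ (shortExact_mk f g hf hg h) x
    (Subsingleton.elim (α := Abelian.Ext _ (ModuleCat.of R C) _) _ _)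
  rw [Subsingleton.elim (α := Abelian.Ext _ (ModuleCat.of R A) _) y 0, Abelian.Ext.zero_comp]

lemma DepthGE.right (f : A →ₗ[R] B) (g : B →ₗ[R] C) (hf : Function.Injective f)
    (hg : Function.Surjective g) (h : Function.Exact f g) {n : ℕ}
    (hA : DepthGE R A (n + 1)) (hB : DepthGE R B n) : DepthGE R C n := fun i hi => by
  have := hA (i + 1) (by omega)
  have := hB i hi
  refine subsingleton_of_forall_eq 0 fun x => ?_
  obtain ⟨y, rfl⟩ := Abelian.Ext.covariant_sequence_exact₃ _ (shortExact_mk f g hf hg h) x rfl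
    (Subsingleton.elim (α := Abelian.Ext _ (ModuleCat.of R A) _) _ _)
  rw [Subsingleton.elim (α := Abelian.Ext _ (ModuleCat.of R B) _) y 0, Abelian.Ext.zero_comp]

lemma DepthGE.left (f : A →ₗ[R] B) (g : B →ₗ[R] C) (hf : Function.Injective f)
    (hg : Function.Surjective g) (h : Function.Exact f g) {n : ℕ}
    (hB : DepthGE R B (n + 1)) (hC : DepthGE R C n) : DepthGE R A (n + 1) := fun i hi => by
  have := hB i hi
  refine subsingleton_of_forall_eq 0 fun x => ?_
  have hS := shortExact_mk f g hf hg h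
  have := hS.mono_f
  cases i with
  | zero =>
    exact Abelian.Ext.postcomp_mk₀_injective_of_mono _ (ModuleCat.ofHom f)
      (Subsingleton.elim (α := Abelian.Ext _ (ModuleCat.of R B) _) _ _)
  | succ i =>
    have := hC i (by omega)
    obtain ⟨y, rfl⟩ := Abelian.Ext.covariant_sequence_exact₁ _ hS x
      (Subsingleton.elim (α := Abelian.Ext _ (ModuleCat.of R B) _) _ _) rfl
    rw [Subsingleton.elim (α := Abelian.Ext _ (ModuleCat.of R C) _) y 0, Abelian.Ext.zero_comp]

/-- The form of `DepthGE.left` in which the depth of the kernel is only claimed up to that of the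
middle term. -/
lemma DepthGE.left' (f : A →ₗ[R] B) (g : B →ₗ[R] C) (hf : Function.Injective f)
    (hg : Function.Surjective g) (h : Function.Exact f g) {n : ℕ}
    (hB : DepthGE R B n) (hC : DepthGE R C (n - 1)) : DepthGE R A n := by
  cases n with
  | zero => exact depthGE_zero
  | succ n => exact DepthGE.left f g hf hg h hB hC

lemma DepthGE.of_retract (s : A →ₗ[R] B) (r : B →ₗ[R] A) (h : r ∘ₗ s = LinearMap.id) {n : ℕ}
    (hB : DepthGE R B n) : DepthGE R A n := fun i hi => by
  have := hB i hi
  refine subsingleton_of_forall_eq 0 fun x => ?_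
  have h1 : ModuleCat.ofHom s ≫ ModuleCat.ofHom r = 𝟙 _ := by
    rw [← ModuleCat.ofHom_comp, h]; rfl
  have h2 : (x.comp (Abelian.Ext.mk₀ (ModuleCat.ofHom s)) (add_zero i)).comp
      (Abelian.Ext.mk₀ (ModuleCat.ofHom r)) (add_zero i) = x := by
    rw [Abelian.Ext.comp_assoc_of_third_deg_zero, Abelian.Ext.mk₀_comp_mk₀, h1,
      Abelian.Ext.comp_mk₀_id]
  rw [← h2, Subsingleton.elim (α := Abelian.Ext _ (ModuleCat.of R B) _) (x.comp _ _) 0,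
    Abelian.Ext.zero_comp]

lemma DepthGE.congr (e : A ≃ₗ[R] B) {n : ℕ} (h : DepthGE R A n) : DepthGE R B n :=
  h.of_retract e.symm.toLinearMap e.toLinearMap (by ext; simp)

lemma DepthGE.prod {n : ℕ} (hA : DepthGE R A n) (hB : DepthGE R B n) : DepthGE R (A × B) n :=
  DepthGE.mid (LinearMap.inl R A B) (LinearMap.snd R A B) LinearMap.inl_injective
    LinearMap.snd_surjective .inl_snd hA hB

lemma depthGE_of_subsingleton [Subsingleton A] (n : ℕ) : DepthGE R A n := fun i _ =>
  subsingleton_of_forall_eq 0 fun x => by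
    have : (𝟙 (ModuleCat.of R A)) = 0 := by ext x; exact Subsingleton.elim (α := A) _ _
    rw [← x.comp_mk₀_id, this, Abelian.Ext.mk₀_zero, Abelian.Ext.comp_zero]

lemma DepthGE.pi {n : ℕ} (h : DepthGE R A n) (a : ℕ) : DepthGE R (Fin a → A) n := by
  induction a with
  | zero => exact depthGE_of_subsingleton n
  | succ a ih => exact (h.prod ih).congr (Fin.consLinearEquiv R fun _ => A)

lemma DepthGE.of_pi {n a : ℕ} (ha : 0 < a) (h : DepthGE R (Fin a → A) n) : DepthGE R A n :=
  h.of_retract (LinearMap.pi fun _ => LinearMap.id) (LinearMap.proj ⟨0, ha⟩) (by ext; simp)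

open RingTheory.Sequence

lemma smul_ext_eq_zero {a : R} (ha : a ∈ IsLocalRing.maximalIdeal R) {Y : ModuleCat.{0} R} {i : ℕ}
    (x : Abelian.Ext.{0} (ModuleCat.of R (IsLocalRing.ResidueField R)) Y i) : a • x = 0 := by
  have h : a • 𝟙 (ModuleCat.of R (IsLocalRing.ResidueField R)) = 0 := by
    ext m
    change a • m = 0
    rw [Algebra.smul_def, IsLocalRing.ResidueField.algebraMap_eq,
      (IsLocalRing.residue_eq_zero_iff a).mpr ha, zero_mul]
  rw [← x.mk₀_id_comp, ← Abelian.Ext.smul_comp, ← Abelian.Ext.mk₀_smul, h, Abelian.Ext.mk₀_zero,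
    Abelian.Ext.zero_comp]

/-- A map with entries in the maximal ideal induces zero on `Ext(k, -)`. -/
lemma comp_mk₀_eq_zero (f : A →ₗ[R] B)
    (hf : f ∈ IsLocalRing.maximalIdeal R • (⊤ : Submodule R (A →ₗ[R] B))) {i : ℕ}
    (x : Abelian.Ext.{0} (ModuleCat.of R (IsLocalRing.ResidueField R)) (ModuleCat.of R A) i) :
    x.comp (Abelian.Ext.mk₀ (ModuleCat.ofHom f)) (add_zero i) = 0 := by
  induction hf using Submodule.smul_induction_on' with
  | smul a ha f _ =>
    have : ModuleCat.ofHom (a • f) = a • ModuleCat.ofHom f := rfl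
    rw [this, Abelian.Ext.mk₀_smul, Abelian.Ext.comp_smul, smul_ext_eq_zero ha]
  | add f _ g _ hf hg =>
    have : ModuleCat.ofHom (f + g) = ModuleCat.ofHom f + ModuleCat.ofHom g := rfl
    rw [this, Abelian.Ext.mk₀_add, Abelian.Ext.comp_add, hf, hg, add_zero]

/-- If `0 → A → B → C → 0` is exact and `A → B` has entries in the maximal ideal, so that it
induces zero on `Ext(k, -)`, then `A` has larger depth than `C`, whatever the depth of `B`. -/
lemma DepthGE.left_of_mem_smul (f : A →ₗ[R] B) (g : B →ₗ[R] C) (hf : Function.Injective f)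
    (hg : Function.Surjective g) (h : Function.Exact f g)
    (hfm : f ∈ IsLocalRing.maximalIdeal R • (⊤ : Submodule R (A →ₗ[R] B))) {n : ℕ}
    (hC : DepthGE R C n) : DepthGE R A (n + 1) := fun i hi => by
  refine subsingleton_of_forall_eq 0 fun x => ?_
  have hx := comp_mk₀_eq_zero f hfm x
  have hS := shortExact_mk f g hf hg h
  have := hS.mono_f
  cases i with
  | zero =>
    refine Abelian.Ext.postcomp_mk₀_injective_of_mono _ (ModuleCat.ofHom f) ?_
    simpa using hx
  | succ i =>
    have := hC i (by omega)
    obtain ⟨y, rfl⟩ := Abelian.Ext.covariant_sequence_exact₁ _ hS x hx rfl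
    have hy : y = 0 := Subsingleton.elim (α := Abelian.Ext _ (ModuleCat.of R C) _) y 0
    rw [hy, Abelian.Ext.zero_comp]

/-- Mathlib's Rees theorem is restricted to finitely generated modules, but the vanishing
of `Ext` against a weakly regular sequence holds without any finiteness assumption. -/
lemma depthGE_of_isWeaklyRegular (rs : List R) (A : Type) [AddCommGroup A] [Module R A]
    (hmem : ∀ r ∈ rs, r ∈ IsLocalRing.maximalIdeal R) (hreg : IsWeaklyRegular A rs) :
    DepthGE R A rs.length := by
  induction rs generalizing A with
  | nil => exact depthGE_zero
  | cons a rs ih =>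
    rw [isWeaklyRegular_cons_iff] at hreg
    simp only [List.mem_cons, forall_eq_or_imp] at hmem
    refine DepthGE.left_of_mem_smul (a • LinearMap.id) (Submodule.mkQ _) (fun u v huv => hreg.1 huv)
      (Submodule.mkQ_surjective _) (fun x => ?_)
      (Submodule.smul_mem_smul hmem.1 Submodule.mem_top) (ih (QuotSMulTop a A) hmem.2 hreg.2)
    simp [Submodule.mem_smul_pointwise_iff_exists]

/-- The Rees theorem for finitely generated modules over a Noetherian local ring. -/
lemma depthGE_iff [IsNoetherianRing R] [Module.Finite R A] [Nontrivial A] (n : ℕ) :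
    DepthGE R A n ↔ ∃ rs : List R, rs.length = n ∧
      (∀ r ∈ rs, r ∈ IsLocalRing.maximalIdeal R) ∧ IsWeaklyRegular A rs := by
  constructor
  · intro h
    obtain ⟨rs, h1, h2, h3⟩ := ModuleCat.exists_isRegular_of_exists_subsingleton_ext
      (IsLocalRing.maximalIdeal R) n (ModuleCat.of R A)
      (lt_top_iff_ne_top.mpr (Ne.symm (Submodule.top_ne_ideal_smul_of_le_jacobson_annihilator
        (IsLocalRing.maximalIdeal_le_jacobson _))))
      (ModuleCat.of R (IsLocalRing.ResidueField R))
      (by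
        change Module.support R (R ⧸ IsLocalRing.maximalIdeal R) = _
        rw [Module.support_eq_zeroLocus, Ideal.annihilator_quotient]) h
    exact ⟨rs, h1, h2, h3.toIsWeaklyRegular⟩
  · rintro ⟨rs, rfl, h2, h3⟩
    exact depthGE_of_isWeaklyRegular rs A h2 h3

/-- Over a Noetherian local ring, depth is bounded by the Krull dimension. -/
lemma exists_not_depthGE [IsNoetherianRing R] : ∃ r, ¬ DepthGE R R r := by
  by_contra! h
  obtain ⟨d, hd⟩ : ∃ d : ℕ, ringKrullDim R ≤ d := by
    obtain ⟨d, hd⟩ := WithBot.ne_bot_iff_exists.mp (ringKrullDim_ne_bot (R := R))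
    obtain ⟨e, he⟩ := ENat.ne_top_iff_exists.mp (show d ≠ ⊤ by
      rintro rfl; exact ringKrullDim_ne_top (R := R) hd.symm)
    exact ⟨e, by rw [← hd, ← he]; rfl⟩
  obtain ⟨rs, h1, h2, h3⟩ := (depthGE_iff (d + 1)).mp (h (d + 1))
  have h4 : IsRegular R rs := .of_isWeaklyRegular_of_mem_maximalIdeal R h2 h3
  have h5 := _root_.ringKrullDim_add_length_eq_ringKrullDim_of_isRegular rs h4
  have : Nontrivial (R ⧸ Ideal.ofList rs) := by
    rw [Ideal.Quotient.nontrivial_iff]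
    simpa using h4.top_ne_smul.symm
  have h6 := ringKrullDim_nonneg_of_nontrivial (R := R ⧸ Ideal.ofList rs)
  have h7 : ((d + 1 : ℕ) : WithBot ℕ∞) ≤ d := by
    refine le_trans ?_ hd
    rw [← h5, h1]
    exact le_add_of_nonneg_left h6
  have : d + 1 ≤ d := by exact_mod_cast h7
  omega

/-- Projective modules, of any rank, have at least the depth of the ring. -/
lemma DepthGE.of_projective [IsNoetherianRing R] [Module.Projective R A] {n : ℕ}
    (h : DepthGE R R n) : DepthGE R A n := by
  obtain ⟨rs, rfl, h2, h3⟩ := (depthGE_iff n).mp h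
  refine depthGE_of_isWeaklyRegular rs A h2 ?_
  exact ((TensorProduct.rid R A).isWeaklyRegular_congr rs).mp
    (h3.isWeaklyRegular_lTensor)

/-- Depth of a module does not change under a surjection of local rings. -/
lemma depthGE_iff_of_surjective [IsNoetherianRing R] {S : Type} [CommRing S] [IsLocalRing S]
    [IsNoetherianRing S] [Algebra R S] (hs : Function.Surjective (algebraMap R S))
    [Module S A] [IsScalarTower R S A] [Module.Finite R A] [Nontrivial A] (n : ℕ) :
    DepthGE S A n ↔ DepthGE R A n := by
  have : Module.Finite S A := Module.Finite.of_restrictScalars_finite R S A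
  have hloc : IsLocalHom (algebraMap R S) := .of_surjective _ hs
  have hm (r : R) : algebraMap R S r ∈ IsLocalRing.maximalIdeal S ↔
      r ∈ IsLocalRing.maximalIdeal R := by
    simp
  rw [depthGE_iff, depthGE_iff]
  constructor
  · rintro ⟨rs, rfl, h2, h3⟩
    obtain ⟨rs, rfl⟩ := (List.map_surjective_iff.mpr hs) rs
    refine ⟨rs, by simp, fun r hr => (hm r).mp (h2 _ (List.mem_map_of_mem hr)),
      (isWeaklyRegular_map_algebraMap_iff S A rs).mp h3⟩
  · rintro ⟨rs, rfl, h2, h3⟩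
    refine ⟨rs.map (algebraMap R S), by simp, ?_, (isWeaklyRegular_map_algebraMap_iff S A rs).mpr h3⟩
    simpa [hm] using h2

open Pointwise in
/-- Dividing by a regular element of the maximal ideal lowers the depth of the ring by one. -/
lemma depthGE_quotient_iff [IsNoetherianRing R] {y : R} (hy : y ∈ IsLocalRing.maximalIdeal R)
    (hreg : y ∈ nonZeroDivisors R) (n : ℕ) :
    DepthGE R (R ⧸ Ideal.span {y}) n ↔ DepthGE R R (n + 1) := by
  have hy' : IsSMulRegular R y := by
    intro a b hab
    simpa using (mul_cancel_left_mem_nonZeroDivisors hreg).mp hab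
  constructor
  · intro h
    have : Nontrivial (R ⧸ Ideal.span {y}) := by
      rw [Ideal.Quotient.nontrivial_iff]
      exact fun h => (Ideal.span_singleton_eq_top.not.mpr hy) h
    obtain ⟨rs, rfl, h2, h3⟩ := (depthGE_iff n).mp h
    refine depthGE_of_isWeaklyRegular (y :: rs) R
      (by rw [List.forall_mem_cons]; exact ⟨hy, h2⟩) ?_
    rw [isWeaklyRegular_cons_iff]
    refine ⟨hy', ((Submodule.quotEquivOfEq _ _ ?_).isWeaklyRegular_congr rs).mp h3⟩
    rw [← Submodule.ideal_span_singleton_smul]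
    simp
  · intro h
    refine DepthGE.right (LinearMap.mulLeft R y) (Ideal.span {y}).mkQ hy'
      (Submodule.mkQ_surjective _) ?_ h (h.mono (by simp))
    intro a
    rw [Submodule.mkQ_apply, Submodule.Quotient.mk_eq_zero, Ideal.mem_span_singleton']
    simp [mul_comm y]

end Depth


/-! ### Modules finitely generated up to projective summands -/

section Stable

variable {R : Type} [CommRing R] {A B C H P : Type} [AddCommGroup A] [Module R A]
  [AddCommGroup B] [Module R B] [AddCommGroup C] [Module R C] [AddCommGroup H] [Module R H]
  [AddCommGroup P] [Module R P]

variable (R A) in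
/-- `A` is finitely generated up to projective summands: `A ⊕ Q' ≅ K ⊕ Q` with `K` finitely
generated and `Q`, `Q'` projective. -/
def StableFG : Prop :=
  ∃ K Q Q' : ModuleCat.{0} R, Module.Finite R K ∧ Module.Projective R Q ∧
    Module.Projective R Q' ∧ Nonempty ((A × Q') ≃ₗ[R] (K × Q))

lemma StableFG.mk' (K Q Q' : Type) [AddCommGroup K] [Module R K] [AddCommGroup Q] [Module R Q]
    [AddCommGroup Q'] [Module R Q'] [Module.Finite R K] [Module.Projective R Q]
    [Module.Projective R Q'] (e : (A × Q') ≃ₗ[R] (K × Q)) : StableFG R A :=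
  ⟨.of R K, .of R Q, .of R Q', inferInstance, inferInstance, inferInstance, ⟨e⟩⟩

lemma StableFG.congr (h : StableFG R A) (e : A ≃ₗ[R] B) : StableFG R B := by
  obtain ⟨K, Q, Q', h1, h2, h3, ⟨f⟩⟩ := h
  exact ⟨K, Q, Q', h1, h2, h3, ⟨(e.symm.prodCongr (.refl R Q')).trans f⟩⟩

lemma StableFG.of_finite [Module.Finite R A] : StableFG R A :=
  .mk' A PUnit PUnit (.refl R _)

lemma StableFG.of_projective [Module.Projective R A] : StableFG R A :=
  .mk' PUnit A PUnit (.prodComm R A PUnit)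

lemma StableFG.of_prod [Module.Projective R P] (h : StableFG R (A × P)) : StableFG R A := by
  obtain ⟨K, Q, Q', h1, h2, h3, ⟨f⟩⟩ := h
  exact .mk' K Q (P × Q') ((LinearEquiv.prodAssoc R A P Q').symm.trans f)

/-- If `ρ` factors through `ψ`, the shear along a factorisation identifies the kernel of
`ψ + ρ` with that of `ψ + 0`. -/
def kerCoprodEquiv (ψ : A →ₗ[R] H) (ρ : B →ₗ[R] H) (σ : B →ₗ[R] A) (h : ψ ∘ₗ σ = ρ) :
    LinearMap.ker (ψ.coprod ρ) ≃ₗ[R] (LinearMap.ker ψ × B) where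
  toFun u := (⟨u.1.1 + σ u.1.2, by
    have := u.2
    simp only [LinearMap.mem_ker, LinearMap.coprod_apply] at this
    have h' : ψ (σ u.1.2) = ρ u.1.2 := LinearMap.congr_fun h _
    rw [LinearMap.mem_ker, map_add, h', this]⟩, u.1.2)
  invFun v := ⟨(v.1.1 - σ v.2, v.2), by
    have := v.1.2
    rw [LinearMap.mem_ker] at this
    simp [← h, this]⟩
  map_add' u v := by ext <;> simp; abel
  map_smul' r u := by ext <;> simp
  left_inv u := by ext <;> simp
  right_inv v := by ext <;> simp

/-- An extension of a stably finitely generated module by a finitely generated one. -/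
lemma StableFG.of_surjective [IsNoetherianRing R] (hB : StableFG R B) (g : C →ₗ[R] B)
    (hg : Function.Surjective g) (hK : Module.Finite R (LinearMap.ker g)) : StableFG R C := by
  obtain ⟨K, Q, Q', h1, h2, h3, ⟨f⟩⟩ := hB
  let t : C × Q' →ₗ[R] K × Q := f.toLinearMap ∘ₗ g.prodMap LinearMap.id
  have ht : Function.Surjective t := f.surjective.comp (hg.prodMap Function.surjective_id)
  let s : C × Q' →ₗ[R] Q := LinearMap.snd R K Q ∘ₗ t
  have hs : Function.Surjective s := fun q => by
    obtain ⟨c, hc⟩ := ht (0, q)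
    exact ⟨c, congrArg Prod.snd hc⟩
  obtain ⟨l, hl⟩ := Module.projective_lifting_property s LinearMap.id hs
  have hfin : Module.Finite R (LinearMap.ker s) := by
    -- the kernel of `s` maps to `K` with kernel that of `g`
    let u : LinearMap.ker s →ₗ[R] K := LinearMap.fst R K Q ∘ₗ t ∘ₗ (LinearMap.ker s).subtype
    let v : LinearMap.ker u →ₗ[R] LinearMap.ker g :=
      LinearMap.codRestrict _ (LinearMap.fst R C Q' ∘ₗ (LinearMap.ker s).subtype ∘ₗ
        (LinearMap.ker u).subtype) (fun x => by
          have h0 : t x.1.1 = 0 := Prod.ext x.2 x.1.2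
          have : (g.prodMap LinearMap.id) x.1.1 = 0 := f.injective (by rw [map_zero]; exact h0)
          exact congrArg Prod.fst this)
    have hv : Function.Injective v := by
      intro x y hxy
      have h0 : t x.1.1 = t y.1.1 := Prod.ext (x.2.trans y.2.symm) (x.1.2.trans y.1.2.symm)
      have : (g.prodMap LinearMap.id) x.1.1 = (g.prodMap LinearMap.id) y.1.1 := f.injective h0
      have h1 : x.1.1.2 = y.1.1.2 := (Prod.ext_iff.mp this).2
      exact Subtype.ext (Subtype.ext (Prod.ext (congrArg Subtype.val hxy) h1))
    have h4 : Module.Finite R (LinearMap.ker u) := Module.Finite.of_injective v hv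
    have h5 : Module.Finite R (LinearMap.ker s ⧸ LinearMap.ker u) :=
      .equiv u.quotKerEquivRange.symm
    exact .of_submodule_quotient (LinearMap.ker u)
  -- `s` is split, so `C × Q'` is the product of its kernel and `Q`
  refine .mk' (LinearMap.ker s) Q Q' ?_
  refine LinearEquiv.symm ((LinearEquiv.ofBijective
    ((LinearMap.ker s).subtype.coprod l) ⟨?_, ?_⟩))
  · refine (injective_iff_map_eq_zero _).mpr fun x hx => ?_
    have h6 := congrArg s hx
    have h7 : s (l x.2) = x.2 := LinearMap.congr_fun hl x.2
    have h8 : s x.1.1 = 0 := x.1.2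
    have h9 : x.2 = 0 := by simpa [h7, h8] using h6
    refine Prod.ext (Subtype.ext ?_) h9
    simpa [h9] using hx
  · intro y
    have h7 : s (l (s y)) = s y := LinearMap.congr_fun hl (s y)
    exact ⟨(⟨y - l (s y), by simp [h7]⟩, s y), by simp⟩

/-- The kernel of a map from a stably finitely generated module to a finitely generated one. The
pullback along a free cover of the target has this kernel as a summand with free complement. -/
lemma StableFG.ker [IsNoetherianRing R] [Module.Finite R H] (hA : StableFG R A) (ψ : A →ₗ[R] H)
    (hψ : Function.Surjective ψ) : StableFG R (LinearMap.ker ψ) := by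
  obtain ⟨n, ρ, hρ⟩ := Module.Finite.exists_fin' R H
  obtain ⟨σ, hσ⟩ := Module.projective_lifting_property ψ ρ hψ
  refine StableFG.of_prod (StableFG.congr ?_ (kerCoprodEquiv ψ ρ σ hσ))
  refine hA.of_surjective (LinearMap.fst R A _ ∘ₗ (LinearMap.ker (ψ.coprod ρ)).subtype) ?_ ?_
  · intro a
    obtain ⟨b, hb⟩ := hρ (-ψ a)
    exact ⟨⟨(a, b), by simp [hb]⟩, rfl⟩
  · refine Module.Finite.of_injective (LinearMap.snd R A _ ∘ₗ
      (LinearMap.ker (ψ.coprod ρ)).subtype ∘ₗ Submodule.subtype _) ?_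
    refine (injective_iff_map_eq_zero _).mpr fun x hx => ?_
    exact Subtype.ext (Subtype.ext (Prod.ext x.2 hx))

/-- Syzygies of stably finitely generated modules, by Schanuel's lemma. -/
lemma StableFG.syzygy [IsNoetherianRing R] [Module.Projective R P] (hB : StableFG R B)
    (φ : P →ₗ[R] B) (hφ : Function.Surjective φ) : StableFG R (LinearMap.ker φ) := by
  obtain ⟨K, Q, Q', h1, h2, h3, ⟨f⟩⟩ := hB
  obtain ⟨n, ρ, hρ⟩ := Module.Finite.exists_fin' R K
  let π₁ : P × Q' →ₗ[R] K × Q := f.toLinearMap ∘ₗ φ.prodMap LinearMap.id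
  have hπ₁ : Function.Surjective π₁ := f.surjective.comp (hφ.prodMap Function.surjective_id)
  let π₂ : (Fin n → R) × Q →ₗ[R] K × Q := ρ.prodMap LinearMap.id
  have hπ₂ : Function.Surjective π₂ := hρ.prodMap Function.surjective_id
  obtain ⟨σ, hσ⟩ := Module.projective_lifting_property π₁ π₂ hπ₁
  obtain ⟨τ, hτ⟩ := Module.projective_lifting_property π₂ π₁ hπ₂
  have hfin : Module.Finite R (LinearMap.ker π₂) := by
    refine Module.Finite.of_injective (LinearMap.fst R _ Q ∘ₗ (LinearMap.ker π₂).subtype) ?_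
    refine (injective_iff_map_eq_zero _).mpr fun x hx => ?_
    have h0 : π₂ x.1 = 0 := x.2
    exact Subtype.ext (Prod.ext hx (show x.1.2 = 0 from congrArg Prod.snd h0))
  have e₁ : LinearMap.ker φ ≃ₗ[R] LinearMap.ker π₁ := LinearEquiv.ofBijective
    ((LinearMap.inl R P Q' ∘ₗ (LinearMap.ker φ).subtype).codRestrict _ (fun x => by
      simp [π₁]))
    ⟨fun x y h => by
      have := congrArg (fun z => z.1.1) h
      exact Subtype.ext this, fun y => by
      have h0 : (φ.prodMap LinearMap.id) y.1 = 0 := f.injective (by rw [map_zero]; exact y.2)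
      refine ⟨⟨y.1.1, congrArg Prod.fst h0⟩, Subtype.ext (Prod.ext rfl ?_)⟩
      exact (congrArg Prod.snd h0).symm⟩
  have e₂ : LinearMap.ker (π₁.coprod π₂) ≃ₗ[R] LinearMap.ker (π₂.coprod π₁) :=
    (LinearEquiv.prodComm R _ _).ofSubmodules _ _ (by
      ext x
      simp [add_comm])
  exact .mk' (LinearMap.ker π₂) (P × Q') ((Fin n → R) × Q)
    ((e₁.prodCongr (.refl R _)).trans ((kerCoprodEquiv π₁ π₂ σ hσ).symm.trans
      (e₂.trans (kerCoprodEquiv π₂ π₁ τ hτ))))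

end Stable

/-! ### The Auslander–Buchsbaum formula in projective dimension one -/

section OneStep

variable {R : Type} [CommRing R] [IsLocalRing R] [IsNoetherianRing R]
  {A B : Type} [AddCommGroup A] [Module R A] [AddCommGroup B] [Module R B]

omit [IsLocalRing R] in
/-- A map from a projective module to `Rⁿ` with entries in `I` is an `I`-linear combination of
maps. -/
lemma mem_smul_of_projective [Module.Projective R A] (I : Ideal R) {n : ℕ}
    (f : A →ₗ[R] (Fin n → R)) (hf : ∀ a i, f a i ∈ I) :
    f ∈ I • (⊤ : Submodule R (A →ₗ[R] (Fin n → R))) := by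
  obtain ⟨k, ρ, hρ⟩ := Module.Finite.exists_fin' R I
  have (i : Fin n) := Module.projective_lifting_property ρ
    ((LinearMap.proj i ∘ₗ f).codRestrict I fun a => hf a i) hρ
  choose l hl using this
  have key : f = ∑ i : Fin n, ∑ j : Fin k, (ρ (Pi.single j 1)).1 •
      (LinearMap.single R (fun _ => R) i ∘ₗ LinearMap.proj j ∘ₗ l i) := by
    ext a i
    have h1 : (ρ (l i a)).1 = f a i := congrArg Subtype.val (LinearMap.congr_fun (hl i) a)
    rw [← h1]
    simp only [LinearMap.sum_apply, Finset.sum_apply, LinearMap.smul_apply, Pi.smul_apply,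
      LinearMap.comp_apply, LinearMap.single_apply, LinearMap.proj_apply]
    rw [Finset.sum_eq_single i (fun j _ hj => by simp [Pi.single_eq_of_ne hj.symm]) (by simp)]
    conv_lhs => rw [pi_eq_sum_univ' (l i a)]
    simp [mul_comm]
  rw [key]
  exact Submodule.sum_mem _ fun i _ => Submodule.sum_mem _ fun j _ =>
    Submodule.smul_mem_smul (ρ _).2 Submodule.mem_top

omit [IsNoetherianRing R] in
/-- Finitely generated modules over a local ring have minimal presentations: free covers whose
kernel has coordinates in the maximal ideal. -/
lemma exists_minimal_cover [Module.Finite R A] : ∃ (n : ℕ) (f : (Fin n → R) →ₗ[R] A),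
    Function.Surjective f ∧ ∀ v, f v = 0 → ∀ i, v i ∈ IsLocalRing.maximalIdeal R := by
  classical
  have hex : ∃ n : ℕ, ∃ v : Fin n → A, Submodule.span R (Set.range v) = ⊤ := by
    obtain ⟨n, v, hv⟩ := Module.Finite.exists_fin (R := R) (M := A)
    exact ⟨n, v, hv⟩
  obtain ⟨v, hv⟩ := Nat.find_spec hex
  have hmin (m : ℕ) (hm : m < Nat.find hex) := Nat.find_min hex hm
  generalize Nat.find hex = n at v hv hmin
  refine ⟨n, Fintype.linearCombination R v, ?_, fun c hc i => ?_⟩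
  · rw [← LinearMap.range_eq_top, Fintype.range_linearCombination, hv]
  · -- a relation with a unit coefficient would make one generator superfluous
    by_contra hi
    have hu : IsUnit (c i) := by simpa using hi
    obtain ⟨m, rfl⟩ : ∃ m, n = m + 1 := ⟨n - 1, by have := i.2; omega⟩
    refine hmin m (Nat.lt_succ_self m) ⟨fun j => v (i.succAbove j), ?_⟩
    rw [eq_top_iff, ← hv, Submodule.span_le]
    have hj (j : Fin m) : v (i.succAbove j) ∈
        Submodule.span R (Set.range fun j => v (i.succAbove j)) :=
      Submodule.subset_span ⟨j, rfl⟩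
    rintro _ ⟨j, rfl⟩
    rcases Fin.eq_self_or_eq_succAbove i j with rfl | ⟨j, rfl⟩
    · rw [Fintype.linearCombination_apply, Fin.sum_univ_succAbove _ j] at hc
      refine (Submodule.smul_mem_iff_of_isUnit _ hu).mp ?_
      rw [eq_neg_of_add_eq_zero_left hc]
      exact Submodule.neg_mem _ (Submodule.sum_mem _ fun k _ => Submodule.smul_mem _ _ (hj k))
    · exact hj j

/-- The Auslander–Buchsbaum formula (as an inequality) for finitely generated modules of
projective dimension exactly one. -/
lemma depthGE_ring_of_finite [Module.Finite R A]
    (hpd : HasProjectiveDimensionLT (ModuleCat.of R A) 2) (hA : ¬ Module.Projective R A) {e : ℕ}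
    (h : DepthGE R A e) : DepthGE R R (e + 1) := by
  obtain ⟨n, f, hf, hmin⟩ := exists_minimal_cover (R := R) (A := A)
  have hex : Function.Exact (LinearMap.ker f).subtype f := f.exact_subtype_ker_map
  have hse := shortExact_mk _ f (Submodule.injective_subtype _) hf hex
  have hP : Module.Projective R (LinearMap.ker f) := by
    have h2 : HasProjectiveDimensionLT (ModuleCat.of R (Fin n → R)) 1 :=
      have : Projective (ModuleCat.of R (Fin n → R)) :=
        (IsProjective.iff_projective _).mp inferInstance
      inferInstance
    have h3 := hse.hasProjectiveDimensionLT_X₁ 1 h2 hpd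
    exact (IsProjective.iff_projective _).mpr (projective_iff_hasProjectiveDimensionLT_one.mpr h3)
  have hF : Module.Free R (LinearMap.ker f) := Module.free_of_flat_of_isLocalRing
  have hne : Nonempty (Module.Free.ChooseBasisIndex R (LinearMap.ker f)) := by
    by_contra hempty
    rw [not_nonempty_iff] at hempty
    have : Subsingleton (LinearMap.ker f) :=
      (Module.Free.chooseBasis R (LinearMap.ker f)).repr.toEquiv.subsingleton
    have hinj : Function.Injective f := by
      rw [← LinearMap.ker_eq_bot]; exact Submodule.eq_bot_of_subsingleton
    exact hA (.of_equiv (LinearEquiv.ofBijective f ⟨hinj, hf⟩))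
  let i := hne.some
  let b := Module.Free.chooseBasis R (LinearMap.ker f)
  have h1 : DepthGE R (LinearMap.ker f) (e + 1) :=
    h.left_of_mem_smul _ f (Submodule.injective_subtype _) hf hex
      (mem_smul_of_projective _ _ fun a i => hmin _ a.2 i)
  exact h1.of_retract (LinearMap.toSpanSingleton R _ (b i)) (b.coord i) (by ext; simp)

/-- The same inequality for modules which are only stably finitely generated; this is where
stable finite generation enters. -/
lemma StableFG.depthGE_ring {X Y : Type} [AddCommGroup X] [Module R X] [AddCommGroup Y]
    [Module R Y] [Module.Projective R X] [Module.Projective R Y] (hA : StableFG R A)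
    (f : X →ₗ[R] Y) (g : Y →ₗ[R] A) (hf : Function.Injective f) (hg : Function.Surjective g)
    (hfg : Function.Exact f g) (hnp : ¬ Module.Projective R A) {e : ℕ}
    (h : DepthGE R A e) (hR : DepthGE R R e) : DepthGE R R (e + 1) := by
  have proj (Z : Type) [AddCommGroup Z] [Module R Z] [Module.Projective R Z] :
      HasProjectiveDimensionLT (ModuleCat.of R Z) 1 :=
    have : Projective (ModuleCat.of R Z) := (IsProjective.iff_projective _).mp inferInstance
    inferInstance
  obtain ⟨K, Q, Q', h1, h2, h3, ⟨t⟩⟩ := hA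
  let s : K →ₗ[R] A × Q' := t.symm.toLinearMap ∘ₗ LinearMap.inl R K Q
  let r : A × Q' →ₗ[R] K := LinearMap.fst R K Q ∘ₗ t.toLinearMap
  have hsr : r ∘ₗ s = LinearMap.id := by ext; simp [r, s]
  have hpdA : HasProjectiveDimensionLT (ModuleCat.of R A) 2 :=
    (shortExact_mk f g hf hg hfg).hasProjectiveDimensionLT_X₃ 1 (proj X)
      (have := proj Y; hasProjectiveDimensionLT_of_ge _ 1 2 (by norm_num))
  have hpdP : HasProjectiveDimensionLT (ModuleCat.of R (A × Q')) 2 :=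
    (shortExact_mk (LinearMap.inl R A Q') (LinearMap.snd R A Q') LinearMap.inl_injective
      LinearMap.snd_surjective .inl_snd).hasProjectiveDimensionLT_X₂ 2 hpdA
      (have := proj Q'; hasProjectiveDimensionLT_of_ge _ 1 2 (by norm_num))
  have hret : Retract (ModuleCat.of R K) (ModuleCat.of R (A × Q')) :=
    ⟨ModuleCat.ofHom s, ModuleCat.ofHom r, by rw [← ModuleCat.ofHom_comp, hsr]; rfl⟩
  refine depthGE_ring_of_finite (A := K) (hret.hasProjectiveDimensionLT 2) (fun hK => hnp ?_)
    ((h.prod (hR.of_projective (A := Q'))).of_retract s r hsr)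
  have : Module.Projective R (A × Q') := .of_equiv t.symm
  exact .of_split (LinearMap.inl R A Q') (LinearMap.fst R A Q') (by ext; simp)

end OneStep


/-! ### Cycles and boundaries -/

section Complexes

variable {R : Type} [CommRing R] (P : ChainComplex (ModuleCat.{0} R) ℤ)

/-- The boundaries of `P` in degree `i`. -/
abbrev bd (i : ℤ) : Submodule R (P.X i) := LinearMap.range (P.d (i + 1) i).hom

/-- The cycles of `P` in degree `i`. -/
abbrev cy (i : ℤ) : Submodule R (P.X i) := LinearMap.ker (P.d i (i - 1)).hom

lemma range_d_eq {i j : ℤ} (h : j + 1 = i) : LinearMap.range (P.d i j).hom = bd P j := by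
  subst h; rfl

lemma ker_d_eq {i j : ℤ} (h : j = i - 1) : LinearMap.ker (P.d i j).hom = cy P i := by
  subst h; rfl

lemma bd_le_cy (i : ℤ) : bd P i ≤ cy P i := by
  rintro _ ⟨x, rfl⟩
  exact LinearMap.congr_fun (ModuleCat.hom_ext_iff.mp (P.d_comp_d (i + 1) i (i - 1))) x

/-- The differential as a surjection `X i → B (i - 1)`. -/
def dB (i : ℤ) : P.X i →ₗ[R] bd P (i - 1) :=
  (P.d i (i - 1)).hom.codRestrict _ fun x => by
    rw [← range_d_eq P (i := i) (by ring)]; exact ⟨x, rfl⟩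

lemma dB_surjective (i : ℤ) : Function.Surjective (dB P i) := by
  rintro ⟨y, hy⟩
  rw [← range_d_eq P (i := i) (by ring)] at hy
  obtain ⟨x, rfl⟩ := hy
  exact ⟨x, rfl⟩

lemma ker_dB (i : ℤ) : LinearMap.ker (dB P i) = cy P i := LinearMap.ker_codRestrict _ _ _

/-- The surjection `X i / B i → B (i - 1)` induced by the differential. -/
def wB (i : ℤ) : (P.X i ⧸ bd P i) →ₗ[R] bd P (i - 1) :=
  (bd P i).liftQ (dB P i) (by rw [ker_dB]; exact bd_le_cy P i)

lemma wB_surjective (i : ℤ) : Function.Surjective (wB P i) := by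
  intro y
  obtain ⟨x, rfl⟩ := dB_surjective P i y
  exact ⟨Submodule.Quotient.mk x, rfl⟩

lemma exists_of_shortComplex_homology_iso {N : Type} [AddCommGroup N] [Module R N]
    (S : ShortComplex (ModuleCat.{0} R)) (e : S.homology ≅ ModuleCat.of R N) :
    ∃ g : LinearMap.ker S.g.hom →ₗ[R] N, Function.Surjective g ∧
      ∀ z, g z = 0 ↔ z.1 ∈ LinearMap.range S.f.hom := by
  let e' : S.moduleCatLeftHomologyData.H ≅ ModuleCat.of R N := S.moduleCatHomologyIso.symm ≪≫ e
  refine ⟨e'.toLinearEquiv.toLinearMap ∘ₗ (LinearMap.range S.moduleCatToCycles).mkQ,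
    e'.toLinearEquiv.surjective.comp (Submodule.mkQ_surjective _), fun z => ?_⟩
  have : (e'.toLinearEquiv.toLinearMap ∘ₗ (LinearMap.range S.moduleCatToCycles).mkQ) z = 0 ↔
      z ∈ LinearMap.range S.moduleCatToCycles := by
    rw [← Submodule.Quotient.mk_eq_zero]
    exact e'.toLinearEquiv.map_eq_zero_iff
  rw [this]
  constructor
  · rintro ⟨x, rfl⟩
    exact ⟨x, rfl⟩
  · rintro ⟨x, hx⟩
    exact ⟨x, Subtype.ext hx⟩

/-- Concrete form of the homology: a surjection from the cycles with kernel the boundaries. -/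
lemma exists_of_homology_iso {N : Type} [AddCommGroup N] [Module R N] {i : ℤ}
    (e : P.homology i ≅ ModuleCat.of R N) :
    ∃ g : cy P i →ₗ[R] N, Function.Surjective g ∧ ∀ z, g z = 0 ↔ z.1 ∈ bd P i :=
  exists_of_shortComplex_homology_iso (P.sc' (i + 1) i (i - 1))
    ((P.homologyIsoSc' (i + 1) i (i - 1) (by simp) (by simp)).symm ≪≫ e)

variable {P} {N : Type} [AddCommGroup N] [Module R N] {i : ℤ}

/-- The exact sequence `0 → B i → Z i → H i → 0`. -/
lemma exact_bd_cy (g : cy P i →ₗ[R] N) (hg : ∀ z, g z = 0 ↔ z.1 ∈ bd P i) :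
    Function.Exact (Submodule.inclusion (bd_le_cy P i)) g := fun z => by
  rw [hg]
  exact ⟨fun h => ⟨⟨z.1, h⟩, rfl⟩, by rintro ⟨y, rfl⟩; exact y.2⟩

/-- The kernel of `Z i → H i` is `B i`. -/
noncomputable def kerEquivBd (g : cy P i →ₗ[R] N) (hg : ∀ z, g z = 0 ↔ z.1 ∈ bd P i) :
    LinearMap.ker g ≃ₗ[R] bd P i :=
  LinearEquiv.ofBijective (((cy P i).subtype ∘ₗ (LinearMap.ker g).subtype).codRestrict (bd P i)
      fun z => (hg z.1).mp z.2)
    ⟨fun x y h => by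
      have h' := Subtype.ext_iff.mp h
      exact Subtype.ext (Subtype.ext h'),
      fun y => ⟨⟨⟨y.1, bd_le_cy P i y.2⟩, (hg _).mpr y.2⟩, rfl⟩⟩

/-- The kernel of `X i / B i → B (i - 1)` is the homology `H i`. -/
noncomputable def homologyEquivKer (g : cy P i →ₗ[R] N) (hs : Function.Surjective g)
    (hg : ∀ z, g z = 0 ↔ z.1 ∈ bd P i) : N ≃ₗ[R] LinearMap.ker (wB P i) :=
  let u : cy P i →ₗ[R] LinearMap.ker (wB P i) :=
    ((bd P i).mkQ ∘ₗ (cy P i).subtype).codRestrict _ fun z => by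
      have h : dB P i z.1 = 0 := by
        rw [← LinearMap.mem_ker, ker_dB]; exact z.2
      exact h
  have hu : Function.Surjective u := by
    rintro ⟨y, hy⟩
    obtain ⟨x, rfl⟩ := Submodule.mkQ_surjective _ y
    have h : x ∈ cy P i := by rw [← ker_dB]; exact hy
    exact ⟨⟨x, h⟩, rfl⟩
  have hk : LinearMap.ker g = LinearMap.ker u := by
    ext z
    rw [LinearMap.mem_ker, hg, LinearMap.mem_ker, ← Submodule.Quotient.mk_eq_zero]
    exact (Subtype.ext_iff (a1 := u z) (a2 := 0)).symm
  (g.quotKerEquivOfSurjective hs).symm ≪≫ₗ Submodule.quotEquivOfEq _ _ hk ≪≫ₗ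
    u.quotKerEquivOfSurjective hu

lemma subsingleton_X (h : IsZero (P.X i)) : Subsingleton (P.X i) :=
  ModuleCat.subsingleton_of_isZero h

end Complexes

/-! ### Cycles and boundaries of quasi-projective resolutions -/

section Resolution

variable {R : Type} [CommRing R] [IsNoetherianRing R] [IsLocalRing R]
  {P : ChainComplex (ModuleCat.{0} R) ℤ} {M : Type} [AddCommGroup M] [Module R M]

lemma int_induction {p : ℤ → Prop} {n : ℤ} (h0 : ∀ i < n, p i) (h1 : ∀ i, p (i - 1) → p i) (i : ℤ) :
    p i := by
  rcases lt_or_ge i n with h | h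
  · exact h0 i h
  · induction i, h using Int.leInduction with
    | base => exact h1 n (h0 _ (by omega))
    | succ k _ ih => exact h1 _ (by simpa using ih)

omit [IsNoetherianRing R] [IsLocalRing R] in
lemma _root_.IsQuasiProjRes.projective (hP : IsQuasiProjRes R P M) (i : ℤ) :
    Module.Projective R (P.X i) :=
  (IsProjective.iff_projective _).mpr (hP.1 i)

omit [IsLocalRing R] in
/-- Although the terms of the resolution may be infinitely generated, the boundaries are finitely
generated up to projective summands, because the homology is finitely generated. -/
lemma stableFG_bd [Module.Finite R M] (hP : IsQuasiProjRes R P M) (i : ℤ) :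
    StableFG R (bd P i) := by
  obtain ⟨n, hn⟩ := hP.2.1
  obtain ⟨a, -, ha⟩ := hP.2.2
  refine int_induction (p := fun i => StableFG R (bd P i)) (n := n) (fun i hi => ?_) (fun i ih => ?_) i
  · have := subsingleton_X (hn i hi)
    exact .of_finite
  · obtain ⟨g, hs, hg⟩ := exists_of_homology_iso P (ha i).some
    have := hP.projective i
    have h : StableFG R (cy P i) := by
      rw [← ker_dB]
      exact ih.syzygy (dB P i) (dB_surjective P i)
    exact (h.ker g hs).congr (kerEquivBd g hg)

omit [IsLocalRing R] in
lemma stableFG_quot [Module.Finite R M] (hP : IsQuasiProjRes R P M) (i : ℤ) :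
    StableFG R (P.X i ⧸ bd P i) := by
  obtain ⟨a, -, ha⟩ := hP.2.2
  obtain ⟨g, hs, hg⟩ := exists_of_homology_iso P (ha i).some
  exact (stableFG_bd hP _).of_surjective (wB P i) (wB_surjective P i)
    (.equiv (homologyEquivKer g hs hg))

/-- The boundaries have depth at least `min (depth R) (depth M + 1)`. -/
lemma depthGE_bd (hP : IsQuasiProjRes R P M) {e j : ℕ} (hR : DepthGE R R e) (hM : DepthGE R M j)
    (hej : e ≤ j + 1) (i : ℤ) : DepthGE R (bd P i) e := by
  obtain ⟨n, hn⟩ := hP.2.1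
  obtain ⟨a, -, ha⟩ := hP.2.2
  refine int_induction (p := fun i => DepthGE R (bd P i) e) (n := n) (fun i hi => ?_) (fun i ih => ?_) i
  · have := subsingleton_X (hn i hi)
    exact depthGE_of_subsingleton _
  · obtain ⟨g, hs, hg⟩ := exists_of_homology_iso P (ha i).some
    have := hP.projective i
    have h : DepthGE R (cy P i) e := by
      rw [← ker_dB]
      exact DepthGE.left' (LinearMap.ker (dB P i)).subtype (dB P i)
        (Submodule.injective_subtype _) (dB_surjective P i) (dB P i).exact_subtype_ker_map
        hR.of_projective (ih.mono (by omega))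
    exact DepthGE.left' _ g (Submodule.inclusion_injective _) hs (exact_bd_cy g hg) h
      ((hM.mono (by omega)).pi _)

omit [IsNoetherianRing R] in
lemma depthGE_quot {N : Type} [AddCommGroup N] [Module R N] {i : ℤ}
    (e : P.homology i ≅ ModuleCat.of R N) {j : ℕ} (hN : DepthGE R N j)
    (hB : DepthGE R (bd P (i - 1)) j) : DepthGE R (P.X i ⧸ bd P i) j := by
  obtain ⟨g, hs, hg⟩ := exists_of_homology_iso P e
  exact DepthGE.mid (LinearMap.ker (wB P i)).subtype (wB P i)
        (Submodule.injective_subtype _) (wB_surjective P i) (wB P i).exact_subtype_ker_map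
        (hN.congr (homologyEquivKer g hs hg)) hB

omit [IsNoetherianRing R] [IsLocalRing R] in
/-- Where the homology vanishes, `X i / B i ≅ B (i - 1)`. -/
lemma exists_quot_equiv_bd {i k : ℤ} (hki : k + 1 = i) (h : IsZero (P.homology i)) :
    Nonempty ((P.X i ⧸ bd P i) ≃ₗ[R] bd P k) := by
  obtain rfl : k = i - 1 := by omega
  obtain ⟨g, hs, hg⟩ := exists_of_homology_iso (N := PUnit) P
    (h.iso (ModuleCat.isZero_of_subsingleton (ModuleCat.of R PUnit)))
  have := (homologyEquivKer g hs hg).toEquiv.symm.subsingleton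
  exact ⟨LinearEquiv.ofBijective (wB P i)
    ⟨LinearMap.ker_eq_bot.mp (Submodule.eq_bot_of_subsingleton), wB_surjective P i⟩⟩

end Resolution


/-! ### Depth estimates along a quasi-projective resolution -/

section Bounds

variable {R : Type} [CommRing R] [IsNoetherianRing R] [IsLocalRing R]
  {P : ChainComplex (ModuleCat.{0} R) ℤ} {M : Type} [AddCommGroup M] [Module R M]

omit [IsNoetherianRing R] [IsLocalRing R] in
lemma isZero_homology {i : ℤ} (h : IsZero (P.X i)) : IsZero (P.homology i) := by
  rw [← HomologicalComplex.exactAt_iff_isZero_homology]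
  exact ShortComplex.exact_of_isZero_X₂ _ h

omit [IsNoetherianRing R] [IsLocalRing R] in
/-- The supremum of the homology may be used as the reference degree in the definition of `qpd`. -/
lemma exists_hsup {n : ℕ} {h : ℤ} (hh : ¬ IsZero (P.homology h))
    (hn : ∀ i, h + n < i → IsZero (P.X i)) :
    ∃ s, ¬ IsZero (P.homology s) ∧ (∀ i, s < i → IsZero (P.homology i)) ∧
      ∀ i, s + n < i → IsZero (P.X i) := by
  obtain ⟨s, h1, h2⟩ := Int.exists_greatest_of_bdd (P := fun i => ¬ IsZero (P.homology i))
    ⟨h + n, fun z hz => by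
      by_contra! hlt
      exact hz (isZero_homology (hn z hlt))⟩ ⟨h, hh⟩
  refine ⟨s, h1, fun i hi => ?_, fun i hi => hn i ?_⟩
  · by_contra hne
    have := h2 i hne
    omega
  · have := h2 h hh
    omega

omit [IsNoetherianRing R] [IsLocalRing R] in
lemma subsingleton_bd {i k : ℤ} (hk : i + 1 = k) (h : IsZero (P.X k)) :
    Subsingleton (bd P i) := by
  subst hk
  have := subsingleton_X h
  refine ⟨fun ⟨x, hx⟩ ⟨y, hy⟩ => Subtype.ext ?_⟩
  obtain ⟨u, rfl⟩ := hx
  obtain ⟨v, rfl⟩ := hy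
  rw [Subsingleton.elim u v]

omit [IsNoetherianRing R] in
lemma depthGE_quot_pred {i : ℤ} (h : IsZero (P.homology (i + 1))) {k : ℕ}
    (hX : DepthGE R (P.X i) k) (hW : DepthGE R (P.X (i + 1) ⧸ bd P (i + 1)) (k + 1)) :
    DepthGE R (P.X i ⧸ bd P i) k := by
  obtain ⟨e⟩ := exists_quot_equiv_bd rfl h
  exact DepthGE.right (bd P i).subtype (bd P i).mkQ (Submodule.injective_subtype _)
    (Submodule.mkQ_surjective _) (LinearMap.exact_subtype_mkQ _) (hW.congr e) hX

omit [IsNoetherianRing R] in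
lemma depthGE_quot_succ {i : ℤ} (h : IsZero (P.homology (i + 1))) {k : ℕ}
    (hX : DepthGE R (P.X i) k) (hW : DepthGE R (P.X i ⧸ bd P i) (k - 1)) :
    DepthGE R (P.X (i + 1) ⧸ bd P (i + 1)) k := by
  obtain ⟨e⟩ := exists_quot_equiv_bd rfl h
  exact (DepthGE.left' (bd P i).subtype (bd P i).mkQ (Submodule.injective_subtype _)
    (Submodule.mkQ_surjective _) (LinearMap.exact_subtype_mkQ _) hX hW).congr e.symm

/-- The inequality `depth M ≥ depth R - n`, for a quasi-projective resolution with
`sup P - hsup P ≤ n`. -/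
lemma depthGE_of_resolution (hP : IsQuasiProjRes R P M) {n : ℕ} {s : ℤ}
    (hs : ¬ IsZero (P.homology s)) (hH : ∀ i, s < i → IsZero (P.homology i))
    (hX : ∀ i, s + n < i → IsZero (P.X i)) (j : ℕ) (hR : DepthGE R R (n + j)) :
    DepthGE R M j := by
  induction j with
  | zero => exact depthGE_zero
  | succ j ih =>
    have hM : DepthGE R M j := ih (hR.mono (by omega))
    have hW (l : ℕ) : ∀ p : ℤ, p + l = s + n → l ≤ n →
        DepthGE R (P.X p ⧸ bd P p) (n + (j + 1) - l) := by
      induction l with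
      | zero =>
        intro p hp _
        have := subsingleton_bd rfl (hX (p + 1) (by push_cast at hp; omega))
        have := hP.projective p
        exact DepthGE.right (bd P p).subtype (bd P p).mkQ (Submodule.injective_subtype _)
          (Submodule.mkQ_surjective _) (LinearMap.exact_subtype_mkQ _)
          (depthGE_of_subsingleton _) hR.of_projective
      | succ l ihl =>
        intro p hp hl
        have := hP.projective p
        refine depthGE_quot_pred (hH _ (by push_cast at hp; omega))
          (hR.mono (by omega)).of_projective ?_
        exact (ihl (p + 1) (by push_cast at hp ⊢; omega) (by omega)).mono (by omega)
    have hWs : DepthGE R (P.X s ⧸ bd P s) (j + 1) := (hW n s rfl le_rfl).mono (by omega)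
    have hB : DepthGE R (bd P (s - 1)) j := depthGE_bd hP (hR.mono (by omega)) hM (by omega) _
    obtain ⟨a, -, ha⟩ := hP.2.2
    obtain ⟨g, hgs, hg⟩ := exists_of_homology_iso P (ha s).some
    have hpos : 0 < a s := by
      by_contra h0
      obtain h0 : a s = 0 := by omega
      refine hs (.of_iso ?_ (ha s).some)
      have : Subsingleton (Fin (a s) → M) := by rw [h0]; infer_instance
      exact ModuleCat.isZero_of_subsingleton _
    refine DepthGE.of_pi hpos (DepthGE.congr (homologyEquivKer g hgs hg).symm ?_)
    exact DepthGE.left (LinearMap.ker (wB P s)).subtype (wB P s) (Submodule.injective_subtype _)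
      (wB_surjective P s) (wB P s).exact_subtype_ker_map hWs hB

/-- The inequality `depth R ≥ depth M + (n + 1)`, for a quasi-projective resolution with
`sup P - hsup P ≤ n + 1` which cannot be shortened. -/
lemma depthGE_ring_of_resolution [Module.Finite R M] (hP : IsQuasiProjRes R P M) {n : ℕ} {s : ℤ}
    (hH : ∀ i, s < i → IsZero (P.homology i)) (hX : ∀ i, s + (n + 1 : ℕ) < i → IsZero (P.X i))
    (hnp : ¬ Module.Projective R (P.X (s + n) ⧸ bd P (s + n))) {j : ℕ} (hM : DepthGE R M j) :
    DepthGE R R (n + 1 + j) := by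
  suffices ∀ e ≤ n + 1 + j, DepthGE R R e from this _ le_rfl
  intro e
  induction e with
  | zero => exact fun _ => depthGE_zero
  | succ e ih =>
    intro he
    have hR : DepthGE R R e := ih (by omega)
    obtain ⟨a, -, ha⟩ := hP.2.2
    have hW (l : ℕ) : ∀ p : ℤ, p = s + l → DepthGE R (P.X p ⧸ bd P p) (min e (j + l)) := by
      induction l with
      | zero =>
        intro p hp
        exact depthGE_quot (ha p).some ((hM.mono (by omega)).pi _)
          (depthGE_bd hP (hR.mono (by omega)) hM (by omega) _)
      | succ l ihl =>
        intro p hp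
        obtain rfl : p = (s + l) + 1 := by push_cast at hp; omega
        have := hP.projective (s + l)
        exact depthGE_quot_succ (hH _ (by omega)) (hR.mono (by omega)).of_projective
          ((ihl _ rfl).mono (by omega))
    have hWn : DepthGE R (P.X (s + n) ⧸ bd P (s + n)) e := (hW n _ rfl).mono (by omega)
    have := hP.projective (s + n)
    have := hP.projective (s + n + 1)
    refine (stableFG_quot hP (s + n)).depthGE_ring (P.d (s + n + 1) (s + n)).hom (bd P _).mkQ ?_
      (Submodule.mkQ_surjective _) ?_ hnp hWn hR
    · rw [← LinearMap.ker_eq_bot, ker_d_eq P (by ring)]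
      obtain ⟨g, hgs, hg⟩ := exists_of_homology_iso (N := PUnit) P
        ((hH (s + n + 1) (by omega)).iso
          (ModuleCat.isZero_of_subsingleton (ModuleCat.of R PUnit)))
      have := subsingleton_bd rfl (hX (s + n + 1 + 1) (by push_cast; omega))
      refine (Submodule.eq_bot_iff _).mpr fun x hx => ?_
      have hx' : x ∈ bd P (s + n + 1) := (hg ⟨x, hx⟩).mp (Subsingleton.elim _ _)
      exact congrArg Subtype.val (Subsingleton.elim (⟨x, hx'⟩ : bd P (s + n + 1)) 0)
    · intro x
      rw [Submodule.mkQ_apply, Submodule.Quotient.mk_eq_zero]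
      rfl

end Bounds

/-! ### Canonical truncation -/

section Truncation

variable {R : Type} [CommRing R] {P : ChainComplex (ModuleCat.{0} R) ℤ} {M : Type}
  [AddCommGroup M] [Module R M]

/-- The inclusion of the degrees `≤ p` into all degrees of a chain complex. -/
def truncEmbedding (p : ℤ) :
    ComplexShape.Embedding (ComplexShape.up ℕ) (ComplexShape.down ℤ) :=
  .mk' _ _ (fun n => p - n) (fun _ _ h => by dsimp at h; omega)
    (fun _ _ => by simp only [ComplexShape.up_Rel, ComplexShape.down_Rel]; omega)

lemma truncEmbedding_f (p : ℤ) (n : ℕ) : (truncEmbedding p).f n = p - n := rfl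

instance (p : ℤ) : (truncEmbedding p).IsTruncGE where
  rel' i j h := by
    simp only [truncEmbedding_f, ComplexShape.up_Rel, ComplexShape.down_Rel] at h ⊢; omega
  mem_next {j k} h := ⟨j + 1, by
    simp only [truncEmbedding_f, ComplexShape.down_Rel] at h ⊢; push_cast; omega⟩

lemma boundaryGE_truncEmbedding (p : ℤ) (n : ℕ) : (truncEmbedding p).BoundaryGE n ↔ n = 0 := by
  constructor
  · intro h
    obtain _ | n := n
    · rfl
    · have : (ComplexShape.up ℕ).Rel n (n + 1) := rfl
      exact absurd h (ComplexShape.Embedding.not_boundaryGE_next _ this)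
  · rintro rfl
    refine ComplexShape.Embedding.boundaryGE _ (i' := p + 1) ?_ ?_
    · simp [truncEmbedding_f]
    · intro i
      simp only [truncEmbedding_f, ne_eq]; omega

/-- Canonical truncation in degree `p`: if `X p / B p` is projective and the homology vanishes
above `p`, then `P` may be replaced by a quasi-projective resolution concentrated in
degrees `≤ p`. -/
lemma exists_truncation (hP : IsQuasiProjRes R P M) {p s : ℤ} (hsp : s ≤ p)
    (hs : ¬ IsZero (P.homology s)) (hH : ∀ i, p < i → IsZero (P.homology i))
    (hW : Module.Projective R (P.X p ⧸ bd P p)) :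
    ∃ P' : ChainComplex (ModuleCat.{0} R) ℤ, IsQuasiProjRes R P' M ∧
      ¬ IsZero (P'.homology s) ∧ ∀ i, p < i → IsZero (P'.X i) := by
  let e := truncEmbedding p
  have hXhi (i : ℤ) (hi : p < i) : IsZero ((P.truncGE e).X i) :=
    (P.truncGE' e).isZero_extend_X e i (fun n => by
      simp only [e, truncEmbedding_f, ne_eq]; omega)
  have hXlo (i : ℤ) (hi : i < p) : Nonempty ((P.truncGE e).X i ≅ P.X i) := by
    obtain ⟨n, hn⟩ : ∃ n : ℕ, i = p - n := ⟨(p - i).toNat, by omega⟩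
    exact ⟨P.truncGEXIso e (i := n) (by simp [e, hn, truncEmbedding_f])
      (by rw [boundaryGE_truncEmbedding]; omega)⟩
  have hXp : Projective ((P.truncGE e).X p) := by
    have i1 := P.truncGEXIsoOpcycles e (i := 0) (i' := p) (by simp [e, truncEmbedding_f])
      ((boundaryGE_truncEmbedding p 0).mpr rfl)
    have i2 : P.opcycles p ≅ ModuleCat.of R (P.X p ⧸ bd P p) :=
      P.opcyclesIsoSc' (p + 1) p (p - 1) (by simp) (by simp) ≪≫
        (P.sc' (p + 1) p (p - 1)).moduleCatOpcyclesIso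
    exact Projective.of_iso (i1 ≪≫ i2).symm ((IsProjective.iff_projective _).mp hW)
  have hHlo (i : ℤ) (hi : i ≤ p) : Nonempty (P.homology i ≅ (P.truncGE e).homology i) := by
    obtain ⟨n, hn⟩ : ∃ n : ℕ, i = p - n := ⟨(p - i).toNat, by omega⟩
    have := P.quasiIsoAt_πTruncGE e (j := n) (j' := i) (by simp [e, hn, truncEmbedding_f])
    exact ⟨isoOfQuasiIsoAt (P.πTruncGE e) i⟩
  have hHiso (i : ℤ) : Nonempty ((P.truncGE e).homology i ≅ P.homology i) := by
    rcases le_or_gt i p with hi | hi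
    · exact ⟨(hHlo i hi).some.symm⟩
    · exact ⟨(isZero_homology (hXhi i hi)).iso (hH i hi)⟩
  refine ⟨P.truncGE e, ⟨fun i => ?_, ?_, ?_⟩, fun h => hs (h.of_iso (hHiso s).some.symm), hXhi⟩
  · rcases lt_trichotomy i p with hi | rfl | hi
    · exact Projective.of_iso (hXlo i hi).some.symm (hP.1 i)
    · exact hXp
    · exact (hXhi i hi).projective
  · obtain ⟨n, hn⟩ := hP.2.1
    refine ⟨min n p, fun i hi => (hn i (by omega)).of_iso (hXlo i (by omega)).some⟩
  · obtain ⟨a, ha, ha'⟩ := hP.2.2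
    exact ⟨a, ha, fun i => ⟨(hHiso i).some ≪≫ (ha' i).some⟩⟩

end Truncation

/-! ### The Auslander–Buchsbaum formula for quasi-projective dimension -/

section Formula

variable {R : Type} [CommRing R] [IsNoetherianRing R] [IsLocalRing R]
  {M : Type} [AddCommGroup M] [Module R M]

omit [IsNoetherianRing R] [IsLocalRing R] in
/-- A finite quasi-projective dimension is attained by a resolution, with the reference degree
being the top degree of the homology. -/
lemma exists_of_qpd_eq {q : ℕ} (hq : qpd R M = q) :
    ∃ (P : ChainComplex (ModuleCat.{0} R) ℤ) (s : ℤ), IsQuasiProjRes R P M ∧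
      ¬ IsZero (P.homology s) ∧ (∀ i, s < i → IsZero (P.homology i)) ∧
      ∀ i, s + q < i → IsZero (P.X i) := by
  have hne : {c : ℕ∞ | ∃ n : ℕ, c = n ∧ ∃ P : ChainComplex (ModuleCat.{0} R) ℤ,
    IsQuasiProjRes R P M ∧
    ∃ h : ℤ, ¬ IsZero (P.homology h) ∧ ∀ i, h + n < i → IsZero (P.X i)}.Nonempty := by
    by_contra hemp
    rw [Set.not_nonempty_iff_eq_empty] at hemp
    rw [qpd, hemp, sInf_empty] at hq
    exact ENat.top_ne_natCast q hq
  obtain ⟨n, hn, P, hP, h, hh, hX⟩ := csInf_mem hne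
  obtain rfl : q = n := by
    rw [qpd] at hq
    exact_mod_cast hq.symm.trans hn
  obtain ⟨s, h1, h2, h3⟩ := exists_hsup hh hX
  exact ⟨P, s, hP, h1, h2, h3⟩

/-- One half of the Auslander–Buchsbaum formula: `depth R ≤ depth M + qpd M`. -/
lemma depthGE_of_qpd {q j : ℕ} (hq : qpd R M = q) (hR : DepthGE R R (q + j)) :
    DepthGE R M j := by
  obtain ⟨P, s, hP, h1, h2, h3⟩ := exists_of_qpd_eq hq
  exact depthGE_of_resolution hP h1 h2 h3 j hR

/-- The other half of the Auslander–Buchsbaum formula: `depth M + qpd M ≤ depth R` if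
`qpd M > 0`. -/
lemma depthGE_ring_of_qpd [Module.Finite R M] {q j : ℕ} (hq : qpd R M = q) (hpos : 0 < q)
    (hM : DepthGE R M j) : DepthGE R R (q + j) := by
  obtain ⟨P, s, hP, h1, h2, h3⟩ := exists_of_qpd_eq hq
  obtain ⟨n, rfl⟩ : ∃ n, q = n + 1 := ⟨q - 1, by omega⟩
  refine depthGE_ring_of_resolution hP h2 h3 (fun hproj => ?_) hM
  obtain ⟨P', hP', hs', hX'⟩ := exists_truncation hP (by omega) h1
    (fun i hi => h2 i (by omega)) hproj
  have : qpd R M ≤ n := sInf_le ⟨n, rfl, P', hP', s, hs', hX'⟩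
  rw [hq] at this
  have : n + 1 ≤ n := by exact_mod_cast this
  omega

end Formula

end QPD

/-- If `M` has finite quasi-projective dimension, `x ∈ m` is `R`-regular with `xM = 0`,
and `n ≥ 1` is such that `qpd_{R/(xⁿ)} M < ∞`, then `qpd_{R/(xⁿ)} M = qpd_R M - 1`. -/
theorem stmt9 (R : Type) [CommRing R] [IsNoetherianRing R] [IsLocalRing R]
    (M : Type) [AddCommGroup M] [Module R M] [Module.Finite R M] (hM : Nontrivial M)
    (hqpd : qpd R M ≠ ⊤)
    (x : R) (hxm : x ∈ IsLocalRing.maximalIdeal R) (hxreg : x ∈ nonZeroDivisors R)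
    (hxM : ∀ m : M, x • m = 0) (n : ℕ) (hn : 0 < n) :
    letI : Module (R ⧸ Ideal.span {x ^ n}) M :=
      Module.IsTorsionBySet.module
        ((Module.isTorsionBySet_span_singleton_iff _).mpr (fun m => by
          obtain ⟨k, rfl⟩ := Nat.exists_eq_succ_of_ne_zero hn.ne'
          rw [pow_succ, mul_smul, hxM, smul_zero]))
    qpd (R ⧸ Ideal.span {x ^ n}) M ≠ ⊤ →
      qpd (R ⧸ Ideal.span {x ^ n}) M = qpd R M - 1 := by
  let _ : Module (R ⧸ Ideal.span {x ^ n}) M :=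
    Module.IsTorsionBySet.module
      ((Module.isTorsionBySet_span_singleton_iff _).mpr (fun m => by
        obtain ⟨k, rfl⟩ := Nat.exists_eq_succ_of_ne_zero hn.ne'
        rw [pow_succ, mul_smul, hxM, smul_zero]))
  intro hqpd'
  have htower : IsScalarTower R (R ⧸ Ideal.span {x ^ n}) M :=
    Module.IsTorsionBySet.isScalarTower _
  have hym : x ^ n ∈ IsLocalRing.maximalIdeal R := Ideal.pow_mem_of_mem _ hxm n hn
  have hyreg : x ^ n ∈ nonZeroDivisors R := pow_mem hxreg n
  have hnt : Nontrivial (R ⧸ Ideal.span {x ^ n}) := by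
    rw [Ideal.Quotient.nontrivial_iff]
    exact fun h => (Ideal.span_singleton_eq_top.not.mpr hym) h
  have hloc : IsLocalRing (R ⧸ Ideal.span {x ^ n}) :=
    .of_surjective' (Ideal.Quotient.mk _) Ideal.Quotient.mk_surjective
  have hsurj : Function.Surjective (algebraMap R (R ⧸ Ideal.span {x ^ n})) :=
    Ideal.Quotient.mk_surjective
  have hfin : Module.Finite (R ⧸ Ideal.span {x ^ n}) M :=
    Module.Finite.of_restrictScalars_finite R _ M
  have hdM (j : ℕ) : QPD.DepthGE (R ⧸ Ideal.span {x ^ n}) M j ↔ QPD.DepthGE R M j :=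
    QPD.depthGE_iff_of_surjective hsurj j
  have hdR (j : ℕ) : QPD.DepthGE (R ⧸ Ideal.span {x ^ n}) (R ⧸ Ideal.span {x ^ n}) j ↔
      QPD.DepthGE R R (j + 1) :=
    (QPD.depthGE_iff_of_surjective hsurj j).trans (QPD.depthGE_quotient_iff hym hyreg j)
  obtain ⟨q, hq⟩ := ENat.ne_top_iff_exists.mp hqpd
  obtain ⟨q', hq'⟩ := ENat.ne_top_iff_exists.mp hqpd'
  have lower (j : ℕ) (h : QPD.DepthGE R R (q + j)) : QPD.DepthGE R M j :=
    QPD.depthGE_of_qpd hq.symm h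
  have upper (j : ℕ) (h0 : 0 < q) (h : QPD.DepthGE R M j) : QPD.DepthGE R R (q + j) :=
    QPD.depthGE_ring_of_qpd hq.symm h0 h
  have lower' (j : ℕ) (h : QPD.DepthGE R R (q' + j + 1)) : QPD.DepthGE R M j :=
    (hdM j).mp (QPD.depthGE_of_qpd hq'.symm ((hdR _).mpr h))
  have upper' (j : ℕ) (h0 : 0 < q') (h : QPD.DepthGE R M j) : QPD.DepthGE R R (q' + j + 1) :=
    (hdR _).mp (QPD.depthGE_ring_of_qpd hq'.symm h0 ((hdM j).mpr h))
  -- `r` is the depth of `R`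
  obtain ⟨r, hr, hr'⟩ : ∃ r, QPD.DepthGE R R r ∧ ∀ k, QPD.DepthGE R R k → k ≤ r := by
    classical
    have hex := QPD.exists_not_depthGE (R := R)
    have hpos : Nat.find hex ≠ 0 := fun h => by
      have := Nat.find_spec hex
      rw [h] at this
      exact this QPD.depthGE_zero
    refine ⟨Nat.find hex - 1, not_not.mp (Nat.find_min hex (by omega)), fun k hk => ?_⟩
    by_contra! hlt
    exact Nat.find_spec hex (hk.mono (by omega))
  have hr1 : 1 ≤ r := hr' 1 ((hdR 0).mp QPD.depthGE_zero)
  have key : q' = q - 1 := by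
    rcases Nat.eq_zero_or_pos q with h0 | h0 <;> rcases Nat.eq_zero_or_pos q' with h0' | h0'
    · omega
    · -- `depth M ≥ depth R` and `depth M + q' ≤ depth R - 1` are incompatible
      have := hr' _ (upper' r h0' (lower r (hr.mono (by omega))))
      omega
    · -- `depth R - 1 ≤ depth M` forces `q ≤ 1`
      have := hr' _ (upper (r - 1) h0 (lower' (r - 1) (hr.mono (by omega))))
      omega
    · have h1 := hr' _ (upper 0 h0 QPD.depthGE_zero)
      have h2 := hr' _ (upper' 0 h0' QPD.depthGE_zero)
      have h3 := hr' _ (upper' (r - q) h0' (lower (r - q) (hr.mono (by omega))))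
      have h4 := hr' _ (upper (r - q' - 1) h0 (lower' (r - q' - 1) (hr.mono (by omega))))
      omega
  rw [← hq, ← hq', key]
  push_cast
  rfl
end

section
/- Let R be a commutative Noetherian ring and M a nonzero finitely generated R-module. Then grade(M,R) ≤ qpd_R M, where grade M = inf{i : Ext^i_R(M,R) ≠ 0} and qpd_R M is the quasi-projective dimension. -/
/-!
The inequality is proved by dimension shifting along a quasi-projective resolution `Q` of `M`.
Let `h` be the top degree in which `Q` has homology, let `Q` vanish above degree `h + n`, and
suppose that `Ext^i(M, R) = 0` for all `i ≤ n`. As `M` has a resolution by finitely generated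
projectives, `Ext^i(M, -)` then vanishes for `i ≤ n` on every projective module
(`CocyclesBound.of_projective`). Put `C_j = coker (Q_{h+j+1} → Q_{h+j})`. Since `Q` has no homology
above `h`, the sequences `0 → C_{j+1} → Q_{h+j} → C_j → 0` are exact (`opcycles_shortExact`), and
`C_{n+1} = 0`; descending induction on `j` gives `Ext^j(M, C_j) = 0`, and finally `Hom(M, C_0) = 0`
(`CocyclesBound.shift`, `CocyclesBound.hom_eq_zero`). But the nonzero module `H_h(Q)` is a finite
power of `M` and embeds in `C_0`, a contradiction. No localization is needed.

Throughout, the vanishing of `Ext^i(M, N)` is used in the form: each degree-`i` cocycle of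
`Hom(P, N)` is a coboundary, where `P` is a fixed projective resolution of `M`.
-/

open CategoryTheory CategoryTheory.Limits Opposite

/-- The cocycle condition for the vanishing of `Ext^i`: every degree-`i` cocycle of
`Hom(C, N)` is a coboundary. For `i = 0` the truncated index `i - 1` is `0` and
`C.d 0 0 = 0`, so that the condition says that the only cocycle is zero. -/
def CocyclesBound {R : Type} [CommRing R] (C : ChainComplex (ModuleCat.{0} R) ℕ) (i : ℕ)
    (N : ModuleCat.{0} R) : Prop :=
  ∀ f : C.X i ⟶ N, C.d (i + 1) i ≫ f = 0 → ∃ g : C.X (i - 1) ⟶ N, C.d i (i - 1) ≫ g = f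

section

variable {R : Type} [CommRing R]

lemma cocyclesBound_of_subsingleton_ext {X : ModuleCat.{0} R} (P : ProjectiveResolution X)
    (i : ℕ) (N : ModuleCat.{0} R)
    (h : Subsingleton (((Ext R (ModuleCat.{0} R) i).obj (op X)).obj N)) :
    CocyclesBound P.complex i N := by
  have hz : IsZero ((P.complex.linearYonedaObj R N).homology i) :=
    (ModuleCat.isZero_of_subsingleton _).of_iso (P.isoExt i N).symm
  rw [← HomologicalComplex.exactAt_iff_isZero_homology] at hz
  have hz' := (HomologicalComplex.exactAt_iff' _ (i - 1) i (i + 1)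
    (by cases i <;> simp) (by simp)).1 hz
  rw [ShortComplex.moduleCat_exact_iff] at hz'
  intro f hf
  obtain ⟨g, hg⟩ := hz' f hf
  exact ⟨g, hg⟩

/-- Since `C.X i` is finitely generated, a cocycle with values in a free module has only finitely
many nonzero coordinates, each of which is a coboundary. -/
lemma CocyclesBound.of_projective {C : ChainComplex (ModuleCat.{0} R) ℕ} {i : ℕ}
    [Module.Finite R (C.X i)] (h : CocyclesBound C i (ModuleCat.of R R))
    (Q : ModuleCat.{0} R) [Projective Q] : CocyclesBound C i Q := by
  classical
  intro f hf
  have hQ : Module.Projective R Q := Q.projective_of_module_projective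
  obtain ⟨s, hs⟩ := hQ.out
  have hc : ∀ x : Q, ∃ g : C.X (i - 1) ⟶ ModuleCat.of R R,
      C.d i (i - 1) ≫ g = f ≫ ModuleCat.ofHom (Finsupp.lapply x ∘ₗ s) := fun x =>
    h _ (by rw [reassoc_of% hf, zero_comp])
  choose g hg using hc
  obtain ⟨S, hS⟩ := (inferInstance : Module.Finite R (C.X i)).fg_top
  let T : Finset Q := S.biUnion fun y => (s (f.hom y)).support
  have key : s ∘ₗ f.hom = ∑ x ∈ T, Finsupp.lsingle x ∘ₗ Finsupp.lapply x ∘ₗ s ∘ₗ f.hom := by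
    refine LinearMap.ext_on hS fun y hy => ?_
    ext z
    have : z ∉ T → s (f.hom y) z = 0 := fun hz => by
      by_contra hne
      exact hz (Finset.mem_biUnion.2 ⟨y, hy, Finsupp.mem_support_iff.2 hne⟩)
    simp only [LinearMap.coe_comp, Function.comp_apply, LinearMap.sum_apply,
      Finsupp.finsetSum_apply, Finsupp.lsingle_apply, Finsupp.lapply_apply,
      Finsupp.single_apply, Finset.sum_ite_eq']
    split_ifs with hz
    · rfl
    · exact this hz
  refine ⟨ModuleCat.ofHom (Finsupp.linearCombination R id ∘ₗ
    ∑ x ∈ T, Finsupp.lsingle x ∘ₗ (g x).hom), ?_⟩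
  ext y
  have hy := congrArg (Finsupp.linearCombination R (id : Q → Q)) (LinearMap.congr_fun key y)
  have hgy : ∀ x, (g x).hom ((C.d i (i - 1)).hom y) = s (f.hom y) x := fun x =>
    LinearMap.congr_fun (congrArg ModuleCat.Hom.hom (hg x)) y
  have hl : Finsupp.linearCombination R (id : Q → Q) (s (f.hom y)) = f.hom y := hs _
  simp only [LinearMap.coe_comp, Function.comp_apply, LinearMap.sum_apply, hl,
    Finsupp.lapply_apply] at hy
  simp only [ModuleCat.hom_comp, ModuleCat.hom_ofHom, LinearMap.coe_comp, Function.comp_apply,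
    LinearMap.sum_apply, hgy]
  exact hy.symm

/-- The piece `Ext^j(-, S.X₂) → Ext^j(-, S.X₃) → Ext^{j+1}(-, S.X₁)` of the long exact sequence. -/
lemma CocyclesBound.shift {C : ChainComplex (ModuleCat.{0} R) ℕ}
    [∀ i, Projective (C.X i)] {S : ShortComplex (ModuleCat.{0} R)} (hS : S.ShortExact) {j : ℕ}
    (h₂ : CocyclesBound C j S.X₂) (h₁ : CocyclesBound C (j + 1) S.X₁) :
    CocyclesBound C j S.X₃ := by
  have := hS.mono_f
  have := hS.epi_g
  intro f hf
  let f' := Projective.factorThru f S.g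
  have hf' : f' ≫ S.g = f := Projective.factorThru_comp f S.g
  let u := hS.exact.lift (C.d (j + 1) j ≫ f') (by rw [Category.assoc, hf', hf])
  have hu : u ≫ S.f = C.d (j + 1) j ≫ f' := hS.exact.lift_f _ _
  obtain ⟨v, hv⟩ : ∃ v : C.X j ⟶ S.X₁, C.d (j + 1) j ≫ v = u :=
    h₁ u (by rw [← cancel_mono S.f, Category.assoc, hu]; simp)
  obtain ⟨w, hw⟩ := h₂ (f' - v ≫ S.f) (by
    rw [Preadditive.comp_sub, reassoc_of% hv, hu, sub_self])
  refine ⟨w ≫ S.g, ?_⟩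
  rw [reassoc_of% hw, Preadditive.sub_comp, Category.assoc, S.zero, hf', comp_zero, sub_zero]

lemma CocyclesBound.hom_eq_zero {X N : ModuleCat.{0} R} (P : ProjectiveResolution X)
    (h : CocyclesBound P.complex 0 N) (φ : X ⟶ N) : φ = 0 := by
  let p : P.complex.X 0 ⟶ X := P.π.f 0
  have : Epi p := inferInstanceAs (Epi (P.π.f 0))
  have hp : P.complex.d 1 0 ≫ p = 0 := P.complex_d_comp_π_f_zero
  obtain ⟨g, hg⟩ := h (p ≫ φ) (by rw [reassoc_of% hp, zero_comp])
  rw [P.complex.shape _ _ (by simp), zero_comp] at hg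
  rw [← cancel_epi p, ← hg, comp_zero]

/-- If the homology of `Q` vanishes in degree `k + 1`, the cokernels of consecutive differentials
form a short exact sequence `0 → Q_{k+1}/B_{k+1} → Q_k → Q_k/B_k → 0`. -/
lemma opcycles_shortExact (Q : ChainComplex (ModuleCat.{0} R) ℤ) (k : ℤ)
    (hk : IsZero (Q.homology (k + 1))) :
    (ShortComplex.mk (Q.fromOpcycles (k + 1) k) (Q.pOpcycles k) (by
      rw [← cancel_epi (Q.pOpcycles (k + 1))]; simp)).ShortExact := by
  have hm : Mono (Q.fromOpcycles (k + 1) k) := by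
    have e := (ShortComplex.exact_of_f_is_kernel
      (ShortComplex.mk _ _ (Q.homologyι_comp_fromOpcycles (k + 1) k))
      (Q.homologyIsKernel (k + 1) k (by simp)))
    exact e.mono_g (hk.eq_of_src _ _)
  refine ShortComplex.ShortExact.mk' ?_ hm (inferInstanceAs (Epi (Q.pOpcycles k)))
  have e := ShortComplex.exact_of_g_is_cokernel
    (ShortComplex.mk _ _ (Q.d_pOpcycles (k + 1) k)) (Q.opcyclesIsCokernel (k + 1) k (by simp))
  let α : ShortComplex.mk _ _ (Q.d_pOpcycles (k + 1) k) ⟶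
      ShortComplex.mk (Q.fromOpcycles (k + 1) k) (Q.pOpcycles k) (by
        rw [← cancel_epi (Q.pOpcycles (k + 1))]; simp) :=
    { τ₁ := Q.pOpcycles (k + 1), τ₂ := 𝟙 _, τ₃ := 𝟙 _ }
  have : Epi α.τ₁ := inferInstanceAs (Epi (Q.pOpcycles (k + 1)))
  have : IsIso α.τ₂ := inferInstanceAs (IsIso (𝟙 _))
  have : Mono α.τ₃ := inferInstanceAs (Mono (𝟙 _))
  exact (ShortComplex.exact_iff_of_epi_of_isIso_of_mono α).1 e

/-- Over a Noetherian ring, every finitely generated module has a projective resolution by finitely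
generated modules. -/
lemma exists_finite_projectiveResolution [IsNoetherianRing R] (X : ModuleCat.{0} R)
    [hX : Module.Finite R X] :
    ∃ P : ProjectiveResolution X, ∀ i, Module.Finite R (P.complex.X i) := by
  have hcov : ∀ Z : {Z : ModuleCat.{0} R // Module.Finite R Z},
      ∃ (k : ℕ) (p : (Fin k → R) →ₗ[R] Z.1), Function.Surjective p := fun Z =>
    have := Z.2
    Module.Finite.exists_fin' R Z.1
  choose k p hp using hcov
  -- the iterated syzygies of `X`
  let Z : ℕ → {Z : ModuleCat.{0} R // Module.Finite R Z} := fun n =>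
    Nat.rec ⟨X, hX⟩ (fun _ Y => ⟨ModuleCat.of R (LinearMap.ker (p Y)),
      inferInstanceAs (Module.Finite R (LinearMap.ker (p Y)))⟩) n
  let δ : ∀ n, (Fin (k (Z (n + 1))) → R) →ₗ[R] (Fin (k (Z n)) → R) := fun n =>
    (LinearMap.ker (p (Z n))).subtype ∘ₗ p (Z (n + 1))
  have hrange : ∀ n, LinearMap.range (δ n) = LinearMap.ker (p (Z n)) := fun n => by
    rw [LinearMap.range_comp, LinearMap.range_eq_top.2 (hp (Z (n + 1))), Submodule.map_top,
      Submodule.range_subtype]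
  have hker : ∀ n, LinearMap.ker (δ n) = LinearMap.ker (p (Z (n + 1))) := fun n =>
    LinearMap.ker_comp_of_ker_eq_bot _ (Submodule.ker_subtype _)
  have hδ' : ∀ n, δ n ∘ₗ δ (n + 1) = 0 := fun n =>
    LinearMap.range_le_ker_iff.1 ((hrange (n + 1)).trans (hker n).symm).le
  have hδ : ∀ n, ModuleCat.ofHom (δ (n + 1)) ≫ ModuleCat.ofHom (δ n) = 0 := fun n =>
    congrArg ModuleCat.ofHom (hδ' n)
  let C : ChainComplex (ModuleCat.{0} R) ℕ :=
    ChainComplex.of (fun n => ModuleCat.of R (Fin (k (Z n)) → R))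
      (fun n => ModuleCat.ofHom (δ n)) hδ
  have hCd : ∀ n, C.d (n + 1) n = ModuleCat.ofHom (δ n) := fun n => by
    simp [C, ChainComplex.of]
  let q : C.X 0 ⟶ X := ModuleCat.ofHom (p (Z 0))
  have hq : C.d 1 0 ≫ q = 0 := by
    rw [hCd, ← ModuleCat.ofHom_comp, LinearMap.range_le_ker_iff.1 (hrange 0).le]
    rfl
  have hq_epi : Epi q := (ModuleCat.epi_iff_surjective _).2 (hp (Z 0))
  have hq_exact : (ShortComplex.mk _ _ hq).Exact := by
    rw [ShortComplex.moduleCat_exact_iff_range_eq_ker]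
    exact (congrArg (fun f => LinearMap.range (ModuleCat.Hom.hom f)) (hCd 0)).trans (hrange 0)
  refine ⟨{ complex := C
            projective := fun n => ?_
            π := (ChainComplex.toSingle₀Equiv _ _).symm ⟨q, hq⟩
            quasiIso := ⟨fun n => ?_⟩ }, fun n => ?_⟩
  · exact (IsProjective.iff_projective (R := R) (Fin (k (Z n)) → R)).1 inferInstance
  · cases n with
    | zero =>
      rw [ChainComplex.quasiIsoAt₀_iff, ShortComplex.quasiIso_iff_of_zeros']
      · refine (ShortComplex.exact_and_epi_g_iff_of_iso ?_).2 ⟨hq_exact, hq_epi⟩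
        exact ShortComplex.isoMk (Iso.refl _) (Iso.refl _) (Iso.refl _)
          ((Category.id_comp _).trans (Category.comp_id _).symm)
          ((Category.id_comp _).trans (Category.comp_id _).symm)
      all_goals rfl
    | succ n =>
      rw [quasiIsoAt_iff_exactAt']
      · rw [HomologicalComplex.exactAt_iff' _ (n + 1 + 1) (n + 1) n (by simp) (by simp),
          ShortComplex.moduleCat_exact_iff_range_eq_ker]
        have h₁ := (congrArg (fun f => LinearMap.range (ModuleCat.Hom.hom f)) (hCd (n + 1))).trans
          (hrange (n + 1))
        have h₂ := (congrArg (fun f => LinearMap.ker (ModuleCat.Hom.hom f)) (hCd n)).trans (hker n)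
        exact h₁.trans h₂.symm
      · apply ChainComplex.exactAt_succ_single_obj
  · exact inferInstanceAs (Module.Finite R (Fin (k (Z n)) → R))

end

/-- `grade(M,R) ≤ qpd_R M` for a nonzero finitely generated module over a Noetherian ring. -/
theorem stmt10 (R : Type) [CommRing R] [IsNoetherianRing R]
    (M : Type) [AddCommGroup M] [Module R M] [Module.Finite R M] (hM : Nontrivial M) :
    extGrade R M R ≤ qpd R M := by
  refine le_sInf ?_
  rintro _ ⟨n, rfl, Q, ⟨hQ, -, a, -, ha⟩, h₀, hh₀, htop₀⟩
  by_contra hlt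
  have hext : ∀ j ≤ n, Subsingleton (extMod R M R j) := fun j hj => by
    by_contra hn
    rw [not_subsingleton_iff_nontrivial] at hn
    exact hlt ((sInf_le ⟨j, rfl, hn⟩ : extGrade R M R ≤ j).trans (by exact_mod_cast hj))
  -- `h` is the top degree with nonzero homology
  obtain ⟨h, hh, hmax⟩ := Int.exists_greatest_of_bdd (P := fun i => ¬ IsZero (Q.homology i))
    ⟨h₀ + n, fun i hi => by
      by_contra hlt'
      exact hi ((Q.exactAt_iff_isZero_homology i).1
        (ShortComplex.exact_of_isZero_X₂ _ (htop₀ i (not_le.1 hlt'))))⟩ ⟨h₀, hh₀⟩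
  have htop : ∀ i, h + n < i → IsZero (Q.X i) := fun i hi =>
    htop₀ i (by have := hmax _ hh₀; omega)
  have hzero : ∀ i, h < i → IsZero (Q.homology i) := fun i hi => by
    by_contra hne
    exact absurd (hmax i hne) (not_le.2 hi)
  obtain ⟨P, hP⟩ := exists_finite_projectiveResolution (ModuleCat.of R M)
  have hB : ∀ m j : ℕ, j + m = n + 1 → CocyclesBound P.complex j (Q.opcycles (h + j)) := by
    intro m
    induction m with
    | zero =>
      intro j hj f _
      have hz : IsZero (Q.opcycles (h + j)) :=
        IsZero.of_epi (Q.pOpcycles (h + j)) (htop _ (by omega))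
      exact ⟨0, hz.eq_of_tgt _ _⟩
    | succ m ih =>
      intro j hj
      have := hQ (h + j)
      have h₁ := ih (j + 1) (by omega)
      rw [Nat.cast_succ, ← add_assoc] at h₁
      exact CocyclesBound.shift (opcycles_shortExact Q (h + j) (hzero _ (by omega)))
        ((cocyclesBound_of_subsingleton_ext P j _ (hext j (by omega))).of_projective _) h₁
  have h0 := hB (n + 1) 0 (by omega)
  rw [Nat.cast_zero, add_zero] at h0
  obtain ⟨e⟩ := ha h
  have hι : e.inv ≫ Q.homologyι h = 0 := by
    ext : 1
    refine LinearMap.pi_ext' fun i => ?_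
    exact congrArg ModuleCat.Hom.hom (h0.hom_eq_zero P
      (ModuleCat.ofHom (LinearMap.single R (fun _ => M) i) ≫ e.inv ≫ Q.homologyι h))
  refine hh (IsZero.of_mono_eq_zero (Q.homologyι h) ?_)
  rw [← cancel_epi e.inv, hι, comp_zero]
end
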